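/- arXiv:1102.4768 — 2 statements merged into one kernel-verified Lean document; each statement's English description precedes it below -/
import Mathlib

section
/- Let V be a real vector space of dimension n > 2 with n ∉ {3,7}, and let T be an alternating trilinear form on V. Then T possesses a singular line: there exist linearly independent a, b ∈ V with T(a,b,x) = 0 for all x ∈ V. -/
/-!
Without a singular line, `(α, x) (β, y) = (α β - ⟪x, y⟫, α y + β x + x × y)` with
`⟪x × y, z⟫ = T(x, y, z)` is a product without zero divisors on `ℝ ⊕ V`, so `n + 1` is one of
`1`, `2`, `4`, `8` by the theorem of Bott, Milnor and Kervaire.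

An odd dimension `> 1` is impossible because the determinant of the left multiplications would be
an odd function without zeros on a connected set. In dimension `2 m`, the complexified left
multiplications form a symbol `z ↦ ∑ zᵢ Aᵢ + z̄ᵢ Bᵢ`, `z ∈ ℂ^m`, with values in the endomorphisms of
`F = ℂ^(2 m)` and invertible for `z ≠ 0`. Let its Toeplitz operator `T` act on the Hardy space of
the sphere in `ℂ^m`, tensored with `F` and the exterior algebra of `ℂ^m`. Comparing Gaussian
integrals with inner products of the Hardy space shows that an invertible symbol gives an operator
bounded below modulo compact operators. `T` commutes modulo compact operators with the Koszul
operator `Q + Q†`, whose kernel is `F`. Going both ways around the square formed by `T` and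
`Q + Q†` on the sectors of fixed parities of the two degrees, additivity of the index expresses
`dim F` through four nullities of `T` and `T†`. The matrix units permuting the `2 ^ (m - 1)`
exterior monomials of fixed parity commute with `T`, so each of these nullities, and hence `2 m`, is
divisible by `2 ^ (m - 1)`.
-/

namespace SingularLine

open ContinuousLinearMap (adjoint)
open Filter (Tendsto cofinite)
open MeasureTheory
open Set (MapsTo)
open scoped ComplexConjugate InnerProductSpace LinearMap.FiniteRangeSetoid NNReal Real
open scoped symmDiff Topology

/-! ### Fredholm operators -/

section Fredholm

variable {𝕜 : Type*} [RCLike 𝕜]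

lemma exists_hasFiniteRange_norm_sub_le {X Y : Type*} [NormedAddCommGroup X] [NormedSpace 𝕜 X]
    [NormedAddCommGroup Y] [InnerProductSpace 𝕜 Y] {K : X →L[𝕜] Y} (hK : IsCompactOperator K)
    {ε : ℝ} (hε : 0 < ε) :
    ∃ F : X →L[𝕜] Y, (F : X →ₗ[𝕜] Y).HasFiniteRange ∧ ‖K - F‖ ≤ ε := by
  obtain ⟨C, hC, hKC⟩ :=
    IsCompactOperator.image_closedBall_subset_compact (f := (K : X →ₗ[𝕜] Y)) hK 1
  obtain ⟨t, -, ht, hCt⟩ := hC.finite_cover_balls hε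
  have : FiniteDimensional 𝕜 (Submodule.span 𝕜 t) := .span_of_finite 𝕜 ht
  set P := (Submodule.span 𝕜 t).starProjection
  have hP_range : (P : Y →ₗ[𝕜] Y).HasFiniteRange := by
    rw [LinearMap.hasFiniteRange_iff_range, Submodule.range_starProjection]
    exact Module.Finite.iff_fg.1 this
  refine ⟨P ∘L K, hP_range.comp_right (K : X →ₗ[𝕜] Y), ?_⟩
  refine ContinuousLinearMap.opNorm_le_of_unit_norm hε.le fun x hx => ?_
  obtain ⟨y, hy, hxy⟩ := Set.mem_iUnion₂.1
    (hCt (hKC (Set.mem_image_of_mem K (mem_closedBall_zero_iff.2 hx.le))))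
  calc ‖(K - P ∘L K) x‖ = ⨅ w : Submodule.span 𝕜 t, ‖K x - w‖ :=
        Submodule.starProjection_minimal (K x)
    _ ≤ ‖K x - y‖ :=
        ciInf_le ⟨0, Set.forall_mem_range.2 fun _ => norm_nonneg _⟩
          (⟨y, Submodule.subset_span hy⟩ : Submodule.span 𝕜 t)
    _ ≤ ε := (mem_ball_iff_norm.1 hxy).le

section Algebra

variable {k V W : Type*} [Field k] [AddCommGroup V] [Module k V] [AddCommGroup W] [Module k W]

lemma index_eq_of_equiv {f g : V →ₗ[k] W} (h : f ≈ g)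
    [FiniteDimensional k f.ker] [FiniteDimensional k (W ⧸ f.range)]
    [FiniteDimensional k g.ker] [FiniteDimensional k (W ⧸ g.range)] : f.index = g.index := by
  set R := (f - g).range
  have : FiniteDimensional k R := Module.Finite.iff_fg.2 <|
    LinearMap.hasFiniteRange_iff_range.1 <|
      LinearMap.FiniteRangeSetoid.equiv_iff_hasFiniteRange.1 h
  have : FiniteDimensional k R.mkQ.ker := by rwa [Submodule.ker_mkQ]
  have : FiniteDimensional k ((W ⧸ R) ⧸ R.mkQ.range) := by
    rw [Submodule.range_mkQ]; infer_instance
  have mkQ_comp : R.mkQ ∘ₗ f = R.mkQ ∘ₗ g := by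
    rw [← sub_eq_zero, ← LinearMap.comp_sub]
    exact LinearMap.range_le_ker_iff.1 R.ker_mkQ.ge
  have := congrArg LinearMap.index mkQ_comp
  rw [LinearMap.index_comp, LinearMap.index_comp] at this
  exact add_left_cancel this

lemma isQuasiInverse_of_left_of_right {u : V →ₗ[k] W} {l r : W →ₗ[k] V}
    (hl : l.IsLeftQuasiInverse u) (hr : r.IsRightQuasiInverse u) : l.IsQuasiInverse u := by
  have l_equiv_r : l ≈ r :=
    calc l = l ∘ₗ .id := rfl
      _ ≈ l ∘ₗ (u ∘ₗ r) := by grw [hr.equiv]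
      _ = (l ∘ₗ u) ∘ₗ r := rfl
      _ ≈ .id ∘ₗ r := by grw [hl.equiv]
      _ = r := rfl
  exact ⟨hl, hr.congr l_equiv_r (Setoid.refl u)⟩

end Algebra

section NormedSpace

variable {X Y Z : Type*} [NormedAddCommGroup X] [NormedSpace 𝕜 X] [NormedAddCommGroup Y]
  [NormedSpace 𝕜 Y] [NormedAddCommGroup Z] [NormedSpace 𝕜 Z]

lemma isFredholm_comp {S : Y →L[𝕜] Z} {T : X →L[𝕜] Y} (hS : S.IsFredholm) (hT : T.IsFredholm) :
    (S ∘L T).IsFredholm := by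
  obtain ⟨S', hS'⟩ := hS.exists_isQuasiInverse
  obtain ⟨T', hT'⟩ := hT.exists_isQuasiInverse
  exact .of_isQuasiInverse (v := T' ∘L S') (hT'.comp hS')

lemma index_comp_of_isFredholm {S : Y →L[𝕜] Z} {T : X →L[𝕜] Y} (hS : S.IsFredholm)
    (hT : T.IsFredholm) :
    (S ∘L T : X →ₗ[𝕜] Z).index = (S : Y →ₗ[𝕜] Z).index + (T : X →ₗ[𝕜] Y).index := by
  have := hT.finite_ker
  have := hS.finite_ker
  have : FiniteDimensional 𝕜 (Y ⧸ (T : X →ₗ[𝕜] Y).range) := hT.finite_coker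
  have : FiniteDimensional 𝕜 (Z ⧸ (S : Y →ₗ[𝕜] Z).range) := hS.finite_coker
  exact LinearMap.index_comp _

lemma index_eq_of_equiv_of_isFredholm {S T : X →L[𝕜] Y} (hS : S.IsFredholm) (hT : T.IsFredholm)
    (h : (S : X →ₗ[𝕜] Y) ≈ T) : (S : X →ₗ[𝕜] Y).index = (T : X →ₗ[𝕜] Y).index := by
  have := hT.finite_ker
  have := hS.finite_ker
  have : FiniteDimensional 𝕜 (Y ⧸ (T : X →ₗ[𝕜] Y).range) := hT.finite_coker
  have : FiniteDimensional 𝕜 (Y ⧸ (S : X →ₗ[𝕜] Y).range) := hS.finite_coker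
  exact index_eq_of_equiv h

lemma isQuasiInverse_units_inv (U : (X →L[𝕜] X)ˣ) :
    ((U⁻¹).1 : X →ₗ[𝕜] X).IsQuasiInverse (U.1 : X →ₗ[𝕜] X) :=
  (ContinuousLinearEquiv.ofUnit U).toLinearEquiv.isQuasiInverse

lemma index_units_eq_zero (U : (X →L[𝕜] X)ˣ) : (U.1 : X →ₗ[𝕜] X).index = 0 :=
  LinearEquiv.index_eq_zero (e := (ContinuousLinearEquiv.ofUnit U).toLinearEquiv)

lemma isFredholm_of_comp_equiv_units {S : Y →L[𝕜] X} {T : X →L[𝕜] Y} (hS : S.IsFredholm)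
    {U : (Y →L[𝕜] Y)ˣ} (h : (T ∘L S : Y →ₗ[𝕜] Y) ≈ (U.1 : Y →ₗ[𝕜] Y)) :
    T.IsFredholm ∧ (T : X →ₗ[𝕜] Y).index = -(S : Y →ₗ[𝕜] X).index := by
  obtain ⟨R, hR⟩ := hS.exists_isQuasiInverse
  have hTS : ((U⁻¹).1 : Y →ₗ[𝕜] Y).IsQuasiInverse (T ∘L S : Y →ₗ[𝕜] Y) :=
    (isQuasiInverse_units_inv U).congr (Setoid.refl _) h
  have hT : T.IsFredholm := .of_isQuasiInverse (v := S ∘L (U⁻¹).1) (.of_comp_left hR hTS)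
  have index_TS := index_eq_of_equiv_of_isFredholm (.of_isQuasiInverse hTS)
    (.of_isQuasiInverse (isQuasiInverse_units_inv U)) h
  rw [index_units_eq_zero, index_comp_of_isFredholm hT hS] at index_TS
  exact ⟨hT, eq_neg_of_add_eq_zero_left index_TS⟩

end NormedSpace

section Perturbation

variable {X Y : Type*} [NormedAddCommGroup X] [NormedSpace 𝕜 X] [NormedAddCommGroup Y]
  [InnerProductSpace 𝕜 Y] [CompleteSpace Y]

/- Write `T - T' = F + E` with `F` of finite range and `E` small. If `S` is a quasi-inverse of `T`,
then `T' S` agrees with the invertible operator `1 - E S` modulo finite range. -/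
lemma isFredholm_of_isCompactOperator_sub {T T' : X →L[𝕜] Y} (hT : T.IsFredholm)
    (hK : IsCompactOperator (T - T')) :
    T'.IsFredholm ∧ (T' : X →ₗ[𝕜] Y).index = (T : X →ₗ[𝕜] Y).index := by
  obtain ⟨S, hS⟩ := hT.exists_isQuasiInverse
  obtain ⟨F, hF, hE⟩ := exists_hasFiniteRange_norm_sub_le (K := T - T') hK
    (ε := 1 / (‖S‖ + 1)) (by positivity)
  set E := T - T' - F with E_def
  have norm_ES : ‖E ∘L S‖ < 1 := calc
    ‖E ∘L S‖ ≤ ‖E‖ * ‖S‖ := ContinuousLinearMap.opNorm_comp_le _ _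
    _ ≤ 1 / (‖S‖ + 1) * ‖S‖ := by gcongr
    _ < 1 := by rw [one_div_mul_eq_div, div_lt_one (by positivity)]; exact lt_add_one _
  obtain ⟨U, hU⟩ := isUnit_one_sub_of_norm_lt_one norm_ES
  have T'S_equiv : (T' ∘L S : Y →ₗ[𝕜] Y) ≈ (U.1 : Y →ₗ[𝕜] Y) := by
    have hTS := LinearMap.FiniteRangeSetoid.equiv_iff_hasFiniteRange.1 hS.2.equiv
    rw [LinearMap.FiniteRangeSetoid.equiv_iff_hasFiniteRange]
    have sub_eq : ((T' ∘L S : Y →L[𝕜] Y) - U.1 : Y →ₗ[𝕜] Y)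
        = (T : X →ₗ[𝕜] Y) ∘ₗ S - .id - (F : X →ₗ[𝕜] Y) ∘ₗ S := by
      ext y; simp [hU, E_def]; abel
    exact sub_eq ▸ hTS.sub (hF.comp_right (S : Y →ₗ[𝕜] X))
  have T_equiv : (T ∘L S : Y →ₗ[𝕜] Y) ≈ ((1 : (Y →L[𝕜] Y)ˣ).1 : Y →ₗ[𝕜] Y) := hS.2.equiv
  have hS_fredholm : S.IsFredholm := .of_isQuasiInverse hS.symm
  obtain ⟨hT', index_T'⟩ := isFredholm_of_comp_equiv_units hS_fredholm T'S_equiv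
  exact ⟨hT', index_T'.trans (isFredholm_of_comp_equiv_units hS_fredholm T_equiv).2.symm⟩

end Perturbation

section EssentiallyBoundedBelow

variable {X Y : Type*} [NormedAddCommGroup X] [InnerProductSpace 𝕜 X] [CompleteSpace X]
  [NormedAddCommGroup Y] [InnerProductSpace 𝕜 Y]

/-- A bounded operator that is bounded below up to a compact quadratic form. If this holds for both
`T` and its adjoint, then `T` is a Fredholm operator. -/
def EssentiallyBoundedBelow (T : X →L[𝕜] Y) : Prop :=
  ∃ c > 0, ∃ K : X →L[𝕜] X, IsCompactOperator K ∧
    ∀ u, c * ‖u‖ ^ 2 ≤ ‖T u‖ ^ 2 + RCLike.re ⟪K u, u⟫_𝕜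

variable [CompleteSpace Y] {T : X →L[𝕜] Y}

lemma EssentiallyBoundedBelow.exists_adjoint_comp_equiv (h : EssentiallyBoundedBelow T) :
    ∃ U : (X →L[𝕜] X)ˣ, (adjoint T ∘L T : X →ₗ[𝕜] X) ≈ (U.1 : X →ₗ[𝕜] X) := by
  obtain ⟨c, hc, K, hK, hcoercive⟩ := h
  obtain ⟨F, hF, hKF⟩ := exists_hasFiniteRange_norm_sub_le hK (half_pos hc)
  have isUnit : IsUnit (adjoint T ∘L T + F) := by
    refine ContinuousLinearMap.isUnit_of_forall_le_norm_inner_map _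
      (c := (c / 2).toNNReal) (by simpa using hc) fun x => ?_
    have re_inner_eq : RCLike.re ⟪(adjoint T ∘L T + F) x, x⟫_𝕜
        = ‖T x‖ ^ 2 + RCLike.re ⟪K x, x⟫_𝕜 - RCLike.re ⟪(K - F) x, x⟫_𝕜 := by
      simp only [add_apply, sub_apply, ContinuousLinearMap.comp_apply, inner_add_left,
        inner_sub_left, map_add, map_sub, ContinuousLinearMap.adjoint_inner_left,
        inner_self_eq_norm_sq]
      ring
    have re_inner_sub_le : RCLike.re ⟪(K - F) x, x⟫_𝕜 ≤ c / 2 * ‖x‖ ^ 2 := calc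
      _ ≤ ‖(K - F) x‖ * ‖x‖ := re_inner_le_norm _ _
      _ ≤ c / 2 * ‖x‖ * ‖x‖ := by gcongr; exact (K - F).le_of_opNorm_le hKF x
      _ = c / 2 * ‖x‖ ^ 2 := by ring
    rw [Real.coe_toNNReal _ (half_pos hc).le]
    linarith [hcoercive x, RCLike.re_le_norm ⟪(adjoint T ∘L T + F) x, x⟫_𝕜]
  refine ⟨isUnit.unit, LinearMap.FiniteRangeSetoid.equiv_iff_hasFiniteRange.2 ?_⟩
  rw [isUnit.unit_spec, ContinuousLinearMap.toLinearMap_add, sub_add_cancel_left]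
  exact hF.neg

lemma EssentiallyBoundedBelow.isFredholm (h : EssentiallyBoundedBelow T)
    (h' : EssentiallyBoundedBelow (adjoint T)) : T.IsFredholm := by
  obtain ⟨U, hU⟩ := h.exists_adjoint_comp_equiv
  obtain ⟨V, hV⟩ := h'.exists_adjoint_comp_equiv
  rw [ContinuousLinearMap.adjoint_adjoint] at hV
  have left_inverse : ((U⁻¹).1 ∘L adjoint T : Y →ₗ[𝕜] X).IsLeftQuasiInverse (T : X →ₗ[𝕜] Y) := calc
    _ = ((U⁻¹).1 : X →ₗ[𝕜] X) ∘ₗ (adjoint T ∘L T : X →ₗ[𝕜] X) := rfl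
    _ ≈ ((U⁻¹).1 : X →ₗ[𝕜] X) ∘ₗ (U.1 : X →ₗ[𝕜] X) := by grw [hU]
    _ ≈ .id := (isQuasiInverse_units_inv U).1
  have right_inverse : (adjoint T ∘L (V⁻¹).1 : Y →ₗ[𝕜] X).IsRightQuasiInverse (T : X →ₗ[𝕜] Y) :=
    calc
    _ = (T ∘L adjoint T : Y →ₗ[𝕜] Y) ∘ₗ ((V⁻¹).1 : Y →ₗ[𝕜] Y) := rfl
    _ ≈ (V.1 : Y →ₗ[𝕜] Y) ∘ₗ ((V⁻¹).1 : Y →ₗ[𝕜] Y) := by grw [hV]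
    _ ≈ .id := (isQuasiInverse_units_inv V).2
  exact .of_isQuasiInverse (isQuasiInverse_of_left_of_right left_inverse right_inverse)

end EssentiallyBoundedBelow

lemma index_eq_finrank_ker_sub_finrank_ker_adjoint {X Y : Type*} [NormedAddCommGroup X]
    [InnerProductSpace 𝕜 X] [CompleteSpace X] [NormedAddCommGroup Y] [InnerProductSpace 𝕜 Y]
    [CompleteSpace Y] {T : X →L[𝕜] Y} (hT : IsClosed (T.range : Set Y)) :
    (T : X →ₗ[𝕜] Y).index = Module.finrank 𝕜 T.ker - Module.finrank 𝕜 (adjoint T).ker := by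
  have : CompleteSpace T.range := hT.completeSpace_coe
  rw [LinearMap.index_eq_finrank_sub, ← ContinuousLinearMap.orthogonal_range,
    (Submodule.quotientEquivOfIsCompl _ _ (Submodule.isCompl_orthogonal T.range)).finrank_eq]

end Fredholm

/-! ### Restriction to invariant subspaces -/

section Restrict

variable {𝕜 X : Type*} [RCLike 𝕜] [NormedAddCommGroup X] [InnerProductSpace 𝕜 X]
  {U V : Submodule 𝕜 X} {T : X →L[𝕜] X}

lemma isCompactOperator_restrict [CompleteSpace V] (hT : IsCompactOperator T)
    (h : MapsTo T U V) : IsCompactOperator (T.restrict h) :=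
  (hT.comp_clm U.subtypeL).codRestrict (fun u => h u.2)
    (completeSpace_coe_iff_isComplete.1 ‹_›).isClosed

lemma EssentiallyBoundedBelow.restrict [CompleteSpace U] (hT : EssentiallyBoundedBelow T)
    (h : MapsTo T U V) : EssentiallyBoundedBelow (T.restrict h) := by
  obtain ⟨c, hc, K, hK, hbound⟩ := hT
  refine ⟨c, hc, U.orthogonalProjectionOnto ∘L K ∘L U.subtypeL,
    (hK.comp_clm U.subtypeL).clm_comp U.orthogonalProjectionOnto, fun u => ?_⟩
  rw [ContinuousLinearMap.comp_apply, Submodule.inner_orthogonalProjectionOnto_eq_of_mem_right]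
  exact hbound u

lemma adjoint_restrict [CompleteSpace X] [CompleteSpace U] [CompleteSpace V]
    (h : MapsTo T U V) (h' : MapsTo (adjoint T) V U) :
    adjoint (T.restrict h) = (adjoint T).restrict h' := by
  symm
  rw [ContinuousLinearMap.eq_adjoint_iff]
  exact fun v u => ContinuousLinearMap.adjoint_inner_left T (u : X) (v : X)

/-- The nullity of `T` on a subspace `U`: the dimension of `U ∩ ker T`. -/
noncomputable def nullityOn (U : Submodule 𝕜 X) (T : X →L[𝕜] X) : ℕ :=
  Module.finrank 𝕜 (U ⊓ T.ker : Submodule 𝕜 X)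

lemma finrank_ker_restrict (h : MapsTo T U V) :
    Module.finrank 𝕜 (T.restrict h).ker = nullityOn U T := by
  have hmap : (T.restrict h).ker.map U.subtype = U ⊓ T.ker := by
    ext x
    simp only [Submodule.mem_map, LinearMap.mem_ker, Submodule.mem_inf,
      ContinuousLinearMap.coe_coe]
    constructor
    · rintro ⟨u, hu, rfl⟩
      exact ⟨u.2, congrArg Subtype.val hu⟩
    · rintro ⟨hx, hTx⟩
      exact ⟨⟨x, hx⟩, Subtype.ext hTx, rfl⟩
  rw [nullityOn, ← hmap]
  exact (Submodule.equivMapOfInjective _ U.injective_subtype _).finrank_eq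

variable [CompleteSpace X]

lemma isFredholm_restrict_and_index [CompleteSpace U] [CompleteSpace V]
    (h : MapsTo T U V) (h' : MapsTo (adjoint T) V U) (hT : EssentiallyBoundedBelow T)
    (hT' : EssentiallyBoundedBelow (adjoint T)) :
    (T.restrict h).IsFredholm ∧
      (T.restrict h).index = (nullityOn U T : ℤ) - nullityOn V (adjoint T) := by
  have hfred : (T.restrict h).IsFredholm :=
    (hT.restrict h).isFredholm (adjoint_restrict h h' ▸ hT'.restrict h')
  refine ⟨hfred, ?_⟩
  rw [index_eq_finrank_ker_sub_finrank_ker_adjoint hfred.isClosed_range,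
    adjoint_restrict h h', finrank_ker_restrict, finrank_ker_restrict]

-- Both sides are indices of compositions `U₁ → U₃`, which differ by a compact operator.
theorem nullityOn_add_eq_of_commute_mod_compact {U₁ U₂ U₃ U₄ : Submodule 𝕜 X}
    [CompleteSpace U₁] [CompleteSpace U₂] [CompleteSpace U₃] [CompleteSpace U₄] {S : X →L[𝕜] X}
    (hT₂₃ : MapsTo T U₂ U₃) (hT₃₂ : MapsTo (adjoint T) U₃ U₂)
    (hT₁₄ : MapsTo T U₁ U₄) (hT₄₁ : MapsTo (adjoint T) U₄ U₁)
    (hS₁₂ : MapsTo S U₁ U₂) (hS₂₁ : MapsTo (adjoint S) U₂ U₁)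
    (hS₄₃ : MapsTo S U₄ U₃) (hS₃₄ : MapsTo (adjoint S) U₃ U₄)
    (hT : EssentiallyBoundedBelow T) (hT' : EssentiallyBoundedBelow (adjoint T))
    (hS : EssentiallyBoundedBelow S) (hS' : EssentiallyBoundedBelow (adjoint S))
    (hcomm : IsCompactOperator (T ∘L S - S ∘L T)) :
    ((nullityOn U₂ T : ℤ) - nullityOn U₃ (adjoint T)) +
        (nullityOn U₁ S - nullityOn U₂ (adjoint S)) =
      (nullityOn U₄ S - nullityOn U₃ (adjoint S)) +
        (nullityOn U₁ T - nullityOn U₄ (adjoint T)) := by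
  obtain ⟨fT₂₃, iT₂₃⟩ := isFredholm_restrict_and_index hT₂₃ hT₃₂ hT hT'
  obtain ⟨fT₁₄, iT₁₄⟩ := isFredholm_restrict_and_index hT₁₄ hT₄₁ hT hT'
  obtain ⟨fS₁₂, iS₁₂⟩ := isFredholm_restrict_and_index hS₁₂ hS₂₁ hS hS'
  obtain ⟨fS₄₃, iS₄₃⟩ := isFredholm_restrict_and_index hS₄₃ hS₃₄ hS hS'
  have hmaps : MapsTo (T ∘L S - S ∘L T) U₁ U₃ := fun u hu =>
    U₃.sub_mem (hT₂₃ (hS₁₂ hu)) (hS₄₃ (hT₁₄ hu))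
  have hcompact : IsCompactOperator
      ((T.restrict hT₂₃ ∘L S.restrict hS₁₂) - (S.restrict hS₄₃ ∘L T.restrict hT₁₄)) :=
    isCompactOperator_restrict hcomm hmaps
  have hindex := (isFredholm_of_isCompactOperator_sub (isFredholm_comp fT₂₃ fS₁₂) hcompact).2
  rw [← iT₂₃, ← iT₁₄, ← iS₁₂, ← iS₄₃, ← index_comp_of_isFredholm fT₂₃ fS₁₂,
    ← index_comp_of_isFredholm fS₄₃ fT₁₄, hindex]

end Restrict

/-! ### Weighted composition operators on `ℓ²` -/

section WeightedComposition

variable {ι E : Type*} [NormedAddCommGroup E] [InnerProductSpace ℂ E]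

lemma sum_norm_weightedComp_le {a : ι → E →L[ℂ] E} {C : ℝ≥0} (ha : ∀ i, ‖a i‖₊ ≤ C)
    {φ : ι → ι} (hφ : φ.Injective) (u : lp (fun _ : ι => E) 2) (s : Finset ι) :
    ∑ i ∈ s, ‖a i (u (φ i))‖ ^ (2 : ENNReal).toReal ≤ (C * ‖u‖) ^ (2 : ENNReal).toReal := by
  have hu := lp.sum_rpow_le_norm_rpow (p := 2) (by simp) u (s.map ⟨φ, hφ⟩)
  simp only [Finset.sum_map, Function.Embedding.coeFn_mk, ENNReal.toReal_ofNat,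
    Real.rpow_ofNat] at hu ⊢
  calc ∑ i ∈ s, ‖a i (u (φ i))‖ ^ 2 ≤ ∑ i ∈ s, (C * ‖u (φ i)‖) ^ 2 := by
        gcongr with i
        exact (a i).le_of_opNorm_le (ha i) _
    _ = C ^ 2 * ∑ i ∈ s, ‖u (φ i)‖ ^ 2 := by simp only [mul_pow, Finset.mul_sum]
    _ ≤ (C * ‖u‖) ^ 2 := by rw [mul_pow]; gcongr

/-- The weighted composition operator `u ↦ (i ↦ a i (u (φ i)))` on `ℓ²(ι, E)`. -/
noncomputable def weightedComp (a : ι → E →L[ℂ] E) {C : ℝ≥0} (ha : ∀ i, ‖a i‖₊ ≤ C)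
    {φ : ι → ι} (hφ : φ.Injective) : lp (fun _ : ι => E) 2 →L[ℂ] lp (fun _ : ι => E) 2 :=
  LinearMap.mkContinuous
    { toFun := fun u => ⟨fun i => a i (u (φ i)), memℓp_gen' (sum_norm_weightedComp_le ha hφ u)⟩
      map_add' := fun u v => lp.ext <| funext fun i => map_add (a i) (u (φ i)) (v (φ i))
      map_smul' := fun c u => lp.ext <| funext fun i => map_smul (a i) c (u (φ i)) }
    C fun u => lp.norm_le_of_forall_sum_le (by simp) (by positivity)
      (sum_norm_weightedComp_le ha hφ u)

variable (ι) in
/-- The operator on `ℓ²(ι, E)` that applies `a` to every coefficient. -/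
noncomputable def pointwise (a : E →L[ℂ] E) : lp (fun _ : ι => E) 2 →L[ℂ] lp (fun _ : ι => E) 2 :=
  weightedComp (fun _ => a) (fun _ => le_rfl) Function.injective_id

@[simp]
lemma pointwise_apply (a : E →L[ℂ] E) (u : lp (fun _ : ι => E) 2) (i : ι) :
    pointwise ι a u i = a (u i) := rfl

lemma adjoint_pointwise [CompleteSpace E] (a : E →L[ℂ] E) :
    adjoint (pointwise ι a) = pointwise ι (adjoint a) := by
  refine ((ContinuousLinearMap.eq_adjoint_iff _ _).2 fun u v => ?_).symm
  simp only [lp.inner_eq_tsum, pointwise_apply, ContinuousLinearMap.adjoint_inner_left]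

lemma nnnorm_ofReal_smul_id_le {r : ℝ} (hr : |r| ≤ 1) :
    ‖(r : ℂ) • ContinuousLinearMap.id ℂ E‖₊ ≤ 1 := by
  rw [← NNReal.coe_le_coe, coe_nnnorm, norm_smul, Complex.norm_real, NNReal.coe_one]
  exact mul_le_one₀ hr (norm_nonneg _) ContinuousLinearMap.norm_id_le

/-- The diagonal operator on `ℓ²(ι, E)` with real weights `w i ∈ [-1, 1]`. -/
noncomputable def diagonal (E : Type*) [NormedAddCommGroup E] [InnerProductSpace ℂ E]
    (w : ι → ℝ) (hw : ∀ i, |w i| ≤ 1) : lp (fun _ : ι => E) 2 →L[ℂ] lp (fun _ : ι => E) 2 :=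
  weightedComp (fun i => (w i : ℂ) • ContinuousLinearMap.id ℂ E)
    (fun i => nnnorm_ofReal_smul_id_le (hw i)) Function.injective_id

@[simp]
lemma diagonal_apply (w : ι → ℝ) (hw : ∀ i, |w i| ≤ 1) (u : lp (fun _ : ι => E) 2) (i : ι) :
    diagonal E w hw u i = (w i : ℂ) • u i := rfl

open Classical in
lemma sum_single_comp_eval_apply (w : ι → ℝ) (s : Finset ι) (u : lp (fun _ : ι => E) 2) (i : ι) :
    (∑ j ∈ s, (w j : ℂ) • lp.singleContinuousLinearMap ℂ (fun _ : ι => E) 2 j ∘L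
      lp.evalCLM ℂ (fun _ : ι => E) 2 j) u i = if i ∈ s then (w i : ℂ) • u i else 0 := by
  rw [sum_apply, lp.coeFn_sum, Finset.sum_apply,
    ← Finset.sum_pi_single i (fun j => (w j : ℂ) • u j)]
  refine Finset.sum_congr rfl fun j _ => ?_
  change (w j : ℂ) • (Pi.single j (u j) : ι → E) i = _
  rw [← Pi.smul_apply, Pi.single_smul]

lemma isCompactOperator_diagonal [FiniteDimensional ℂ E] {w : ι → ℝ} (hw : ∀ i, |w i| ≤ 1)
    (hw0 : Tendsto w cofinite (𝓝 0)) : IsCompactOperator (diagonal E w hw) := by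
  classical
  have : ProperSpace E := FiniteDimensional.proper ℂ E
  set P : Finset ι → lp (fun _ : ι => E) 2 →L[ℂ] lp (fun _ : ι => E) 2 := fun s =>
    ∑ j ∈ s, (w j : ℂ) • lp.singleContinuousLinearMap ℂ (fun _ : ι => E) 2 j ∘L
      lp.evalCLM ℂ (fun _ : ι => E) 2 j with hP
  refine isCompactOperator_of_tendsto (l := Filter.atTop) (F := P) ?_ (.of_forall fun s => ?_)
  · refine Metric.tendsto_atTop.2 fun ε hε => ?_
    have hfin : {i | ¬ |w i| < ε / 2}.Finite := by
      simpa [Real.norm_eq_abs] using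
        (Metric.tendsto_nhds.1 hw0 (ε / 2) (half_pos hε))
    refine ⟨hfin.toFinset, fun s hs => ?_⟩
    rw [dist_eq_norm]
    refine lt_of_le_of_lt (ContinuousLinearMap.opNorm_le_bound _ (half_pos hε).le fun u => ?_)
      (half_lt_self hε)
    rw [← abs_of_pos (half_pos hε), ← Real.norm_eq_abs, ← Complex.norm_real, ← norm_smul]
    refine lp.norm_mono (by simp) fun i => ?_
    rw [sub_apply, lp.coeFn_sub, Pi.sub_apply, hP,
      sum_single_comp_eval_apply, diagonal_apply, lp.coeFn_smul, Pi.smul_apply, norm_smul]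
    split_ifs with hi
    · simp only [sub_self, norm_zero]; positivity
    · have : |w i| < ε / 2 := not_not.1 fun h => hi (hs (hfin.mem_toFinset.2 h))
      rw [zero_sub, norm_neg, norm_smul, Complex.norm_real, Complex.norm_real,
        Real.norm_of_nonneg (half_pos hε).le]
      gcongr
      exact this.le
  · refine Submodule.sum_mem (compactOperator (RingHom.id ℂ) _ _) fun j _ =>
      Submodule.smul_mem _ _ ?_
    exact (isCompactOperator_of_locallyCompactSpace_rng
      (lp.singleContinuousLinearMap ℂ (fun _ : ι => E) 2 j)).comp_clm _

end WeightedComposition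

/-! ### The shifts on the Hardy space of the sphere -/

section Degree

variable {m : ℕ}

/-- The total degree of a multi-index. -/
def degree (α : Fin m → ℕ) : ℕ := ∑ i, α i

/-- The multi-index `α + eᵢ`. -/
def raise (i : Fin m) (α : Fin m → ℕ) : Fin m → ℕ := α + Pi.single i 1

lemma degree_eq_zero {α : Fin m → ℕ} : degree α = 0 ↔ α = 0 := by
  simp [degree, funext_iff]

@[simp]
lemma degree_raise (i : Fin m) (α : Fin m → ℕ) : degree (raise i α) = degree α + 1 := by
  simp [degree, raise, Finset.sum_add_distrib]

@[simp]
lemma raise_apply_self (i : Fin m) (α : Fin m → ℕ) : raise i α i = α i + 1 := by simp [raise]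

lemma raise_apply_of_ne {i j : Fin m} (h : j ≠ i) (α : Fin m → ℕ) : raise i α j = α j := by
  simp [raise, h]

lemma raise_injective (i : Fin m) : Function.Injective (raise i) := add_left_injective _

lemma raise_comm (i j : Fin m) (α : Fin m → ℕ) : raise i (raise j α) = raise j (raise i α) :=
  add_right_comm _ _ _

lemma exists_eq_raise {i : Fin m} {β : Fin m → ℕ} (h : β i ≠ 0) : ∃ α, β = raise i α := by
  refine ⟨β - Pi.single i 1, funext fun j => ?_⟩
  rcases eq_or_ne j i with rfl | hj
  · simp [Nat.sub_add_cancel (Nat.one_le_iff_ne_zero.2 h)]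
  · simp [raise, hj]

lemma apply_le_degree (α : Fin m → ℕ) (i : Fin m) : α i ≤ degree α :=
  Finset.single_le_sum (fun _ _ => Nat.zero_le _) (Finset.mem_univ i)

lemma tendsto_degree_cofinite : Tendsto (degree (m := m)) cofinite Filter.atTop := by
  refine Filter.tendsto_atTop.2 fun N => Filter.eventually_cofinite.2 ?_
  refine (Set.finite_Iic (fun _ : Fin m => N)).subset fun α hα i => ?_
  exact (apply_le_degree α i).trans (not_le.1 hα).le

/-- The reciprocal of `|α| + m`, the squared norm ratio between consecutive degrees. -/
noncomputable def degreeInv (α : Fin m → ℕ) : ℝ := 1 / (degree α + m)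

lemma degreeInv_nonneg (α : Fin m → ℕ) : 0 ≤ degreeInv α := by unfold degreeInv; positivity

lemma abs_sqrt_one_sub_degreeInv_le_one (α : Fin m → ℕ) : |√(1 - degreeInv α)| ≤ 1 := by
  rw [abs_of_nonneg (Real.sqrt_nonneg _), Real.sqrt_le_one]
  exact sub_le_self _ (degreeInv_nonneg α)

lemma tendsto_degreeInv_cofinite : Tendsto (degreeInv (m := m)) cofinite (𝓝 0) := by
  have h : Tendsto (fun α : Fin m → ℕ => (degree α : ℝ) + m) cofinite Filter.atTop :=
    Filter.tendsto_atTop_add_const_right _ _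
      (tendsto_natCast_atTop_atTop.comp tendsto_degree_cofinite)
  exact h.const_div_atTop 1

/-- The ratio `‖z^(α + eᵢ)‖ / ‖z^α‖` of norms of monomials on the unit sphere of `ℂ^m`. -/
noncomputable def shiftWeight (i : Fin m) (α : Fin m → ℕ) : ℝ := √((α i + 1) * degreeInv α)

lemma shiftWeight_sq (i : Fin m) (α : Fin m → ℕ) :
    shiftWeight i α ^ 2 = (α i + 1) * degreeInv α :=
  Real.sq_sqrt (mul_nonneg (by positivity) (degreeInv_nonneg α))

lemma shiftWeight_mul_shiftWeight_raise_comm (i j : Fin m) (α : Fin m → ℕ) :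
    shiftWeight i α * shiftWeight j (raise i α) = shiftWeight j α * shiftWeight i (raise j α) := by
  rcases eq_or_ne i j with rfl | hij
  · rfl
  simp only [shiftWeight, degreeInv, raise_apply_of_ne hij, raise_apply_of_ne hij.symm,
    degree_raise]
  rw [← Real.sqrt_mul (by positivity), ← Real.sqrt_mul (by positivity)]
  ring_nf

variable [NeZero m]

lemma one_le_degree_add (α : Fin m → ℕ) : (1 : ℝ) ≤ degree α + m := by
  exact_mod_cast (NeZero.one_le (n := m)).trans (Nat.le_add_left _ _)

lemma degreeInv_sub_degreeInv_raise (i : Fin m) (α : Fin m → ℕ) :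
    degreeInv α - degreeInv (raise i α) = degreeInv α * degreeInv (raise i α) := by
  have hx : (0 : ℝ) < degree α + m := zero_lt_one.trans_le (one_le_degree_add α)
  simp only [degreeInv, degree_raise]
  push_cast
  field_simp
  ring

lemma degreeInv_le_one (α : Fin m → ℕ) : degreeInv α ≤ 1 :=
  div_le_one_of_le₀ (one_le_degree_add α) (by positivity)

lemma abs_degreeInv_le_one (α : Fin m → ℕ) : |degreeInv α| ≤ 1 := by
  rw [abs_of_nonneg (degreeInv_nonneg α)]
  exact degreeInv_le_one α

lemma sum_shiftWeight_sq (α : Fin m → ℕ) : ∑ i, shiftWeight i α ^ 2 = 1 := by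
  simp only [shiftWeight_sq, ← Finset.sum_mul, Finset.sum_add_distrib, Finset.sum_const,
    Finset.card_univ, Fintype.card_fin, nsmul_eq_mul, mul_one]
  rw [← Nat.cast_sum]
  exact mul_one_div_cancel (zero_lt_one.trans_le (one_le_degree_add α)).ne'

lemma abs_shiftWeight_le_one (i : Fin m) (α : Fin m → ℕ) : |shiftWeight i α| ≤ 1 := by
  rw [← sq_le_one_iff_abs_le_one, ← sum_shiftWeight_sq α]
  exact Finset.single_le_sum (f := fun j => shiftWeight j α ^ 2) (fun _ _ => sq_nonneg _)
    (Finset.mem_univ i)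

lemma shiftWeight_raise_mul_shiftWeight_raise {i j : Fin m} (hij : i ≠ j) (α : Fin m → ℕ) :
    shiftWeight j (raise i α) * shiftWeight i (raise j α) =
      (1 - degreeInv (raise i α)) * (shiftWeight i α * shiftWeight j α) := by
  have hx : (0 : ℝ) < degree α + m := zero_lt_one.trans_le (one_le_degree_add α)
  have h : 1 - degreeInv (raise i α) = √((degree α + m) ^ 2 / (degree α + m + 1) ^ 2) := by
    rw [Real.sqrt_div (by positivity), Real.sqrt_sq hx.le, Real.sqrt_sq (by positivity), degreeInv,
      degree_raise]
    push_cast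
    field_simp
    ring
  rw [h]
  simp only [shiftWeight, degreeInv, raise_apply_of_ne hij, raise_apply_of_ne hij.symm,
    degree_raise]
  rw [← Real.sqrt_mul (by positivity), ← Real.sqrt_mul (by positivity),
    ← Real.sqrt_mul (by positivity)]
  congr 1
  push_cast
  field_simp
  ring

end Degree

section Shift

variable {m : ℕ} {E : Type*} [NormedAddCommGroup E]

/-- The Hardy space of `E`-valued functions on the unit sphere of `ℂ^m`, through the coefficients
of a function with respect to the normalised monomials. -/
abbrev Hardy (m : ℕ) (E : Type*) [NormedAddCommGroup E] : Type _ := lp (fun _ : Fin m → ℕ => E) 2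

variable [InnerProductSpace ℂ E] [NeZero m]

variable (E) in
/-- The adjoint of multiplication by the `i`-th coordinate. -/
noncomputable def coshift (i : Fin m) : Hardy m E →L[ℂ] Hardy m E :=
  weightedComp (fun α => (shiftWeight i α : ℂ) • ContinuousLinearMap.id ℂ E)
    (fun α => nnnorm_ofReal_smul_id_le (abs_shiftWeight_le_one i α)) (raise_injective i)

@[simp]
lemma coshift_apply (i : Fin m) (u : Hardy m E) (α : Fin m → ℕ) :
    coshift E i u α = (shiftWeight i α : ℂ) • u (raise i α) := rfl

lemma coshift_comm (i j : Fin m) : coshift E i ∘L coshift E j = coshift E j ∘L coshift E i := by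
  ext u α
  simp only [ContinuousLinearMap.comp_apply, coshift_apply, smul_smul, ← Complex.ofReal_mul,
    shiftWeight_mul_shiftWeight_raise_comm i j, raise_comm i j]

lemma coshift_comp_pointwise (a : E →L[ℂ] E) (i : Fin m) :
    coshift E i ∘L pointwise _ a = pointwise _ a ∘L coshift E i := by
  ext u α
  simp

lemma coshift_single_raise (i : Fin m) (α : Fin m → ℕ) (x : E) :
    coshift E i (lp.single 2 (raise i α) x) = lp.single 2 α ((shiftWeight i α : ℂ) • x) := by
  ext β
  rcases eq_or_ne β α with rfl | h
  · simp
  · simp [Pi.single_eq_of_ne h, Pi.single_eq_of_ne ((raise_injective i).ne h)]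

lemma coshift_single_eq_zero {i : Fin m} {β : Fin m → ℕ} (h : β i = 0) (x : E) :
    coshift E i (lp.single 2 β x) = 0 := by
  ext α
  have hne : raise i α ≠ β := fun h' => by simp [← h'] at h
  simp [Pi.single_eq_of_ne hne]

variable (E) in
/-- The diagonal operator with the weights `√(1 - 1 / (|α| + m))`: it accounts for the two degrees
that separate the factors of `⟪zᵢ zⱼ f, g⟫` when Gaussian integrals are compared with inner
products in the Hardy space. -/
noncomputable def gaussianCorrection : Hardy m E →L[ℂ] Hardy m E :=
  diagonal E (fun α => √(1 - degreeInv α)) abs_sqrt_one_sub_degreeInv_le_one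

lemma one_sub_sqrt_one_sub_mem_Icc {t : ℝ} (ht : t ∈ Set.Icc 0 1) :
    1 - √(1 - t) ∈ Set.Icc 0 t := by
  have h0 : 0 ≤ 1 - t := sub_nonneg.2 ht.2
  have h1 : √(1 - t) ≤ 1 := Real.sqrt_le_one.2 (sub_le_self _ ht.1)
  refine ⟨sub_nonneg.2 h1, ?_⟩
  nlinarith [Real.sq_sqrt h0, Real.sqrt_nonneg (1 - t)]

lemma isCompactOperator_id_sub_gaussianCorrection [FiniteDimensional ℂ E] :
    IsCompactOperator
      (ContinuousLinearMap.id ℂ (Hardy m E) - gaussianCorrection E : _ →L[ℂ] _) := by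
  have hmem (α : Fin m → ℕ) : 1 - √(1 - degreeInv α) ∈ Set.Icc 0 (degreeInv α) :=
    one_sub_sqrt_one_sub_mem_Icc ⟨degreeInv_nonneg α, degreeInv_le_one α⟩
  have hw (α : Fin m → ℕ) : |1 - √(1 - degreeInv α)| ≤ 1 := by
    rw [abs_of_nonneg (hmem α).1]
    exact (hmem α).2.trans (degreeInv_le_one α)
  have heq : ContinuousLinearMap.id ℂ (Hardy m E) - gaussianCorrection E =
      diagonal E (fun α => 1 - √(1 - degreeInv α)) hw := by
    ext u α
    simp [gaussianCorrection, sub_smul]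
  rw [heq]
  exact isCompactOperator_diagonal hw (squeeze_zero (fun α => (hmem α).1) (fun α => (hmem α).2)
    tendsto_degreeInv_cofinite)

variable [CompleteSpace E]

variable (E) in
/-- Multiplication by the `i`-th coordinate. -/
noncomputable def shift (i : Fin m) : Hardy m E →L[ℂ] Hardy m E := adjoint (coshift E i)

@[simp]
lemma adjoint_shift (i : Fin m) : adjoint (shift E i) = coshift E i :=
  ContinuousLinearMap.adjoint_adjoint _

@[simp]
lemma adjoint_coshift (i : Fin m) : adjoint (coshift E i) = shift E i := rfl

lemma shift_comm (i j : Fin m) : shift E i ∘L shift E j = shift E j ∘L shift E i := by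
  simp only [shift, ← ContinuousLinearMap.adjoint_comp, coshift_comm i j]

lemma shift_comp_pointwise (a : E →L[ℂ] E) (i : Fin m) :
    shift E i ∘L pointwise _ a = pointwise _ a ∘L shift E i := by
  rw [← ContinuousLinearMap.adjoint_adjoint (pointwise _ a), adjoint_pointwise, shift,
    ← ContinuousLinearMap.adjoint_comp, ← ContinuousLinearMap.adjoint_comp, coshift_comp_pointwise]

lemma inner_shift_apply (i : Fin m) (u : Hardy m E) (β : Fin m → ℕ) (x : E) :
    ⟪x, shift E i u β⟫_ℂ = ⟪coshift E i (lp.single 2 β x), u⟫_ℂ := by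
  rw [shift, ← ContinuousLinearMap.adjoint_inner_right]
  exact (lp.inner_single_left (G := fun _ => E) β x _).symm

@[simp]
lemma shift_apply_raise (i : Fin m) (u : Hardy m E) (α : Fin m → ℕ) :
    shift E i u (raise i α) = (shiftWeight i α : ℂ) • u α := by
  refine ext_inner_left ℂ fun x => ?_
  rw [inner_shift_apply, coshift_single_raise, lp.inner_single_left, inner_smul_left,
    inner_smul_right, Complex.conj_ofReal]

lemma shift_apply_eq_zero {i : Fin m} {β : Fin m → ℕ} (h : β i = 0) (u : Hardy m E) :
    shift E i u β = 0 := by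
  refine ext_inner_left ℂ fun x => ?_
  rw [inner_shift_apply, coshift_single_eq_zero h, inner_zero_left, inner_zero_right]

lemma shift_single (i : Fin m) (α : Fin m → ℕ) (x : E) :
    shift E i (lp.single 2 α x) = lp.single 2 (raise i α) ((shiftWeight i α : ℂ) • x) := by
  ext β
  by_cases h : β i = 0
  · have hne : β ≠ raise i α := fun h' => by simp [h'] at h
    simp [shift_apply_eq_zero h, Pi.single_eq_of_ne hne]
  · obtain ⟨γ, rfl⟩ := exists_eq_raise h
    rcases eq_or_ne γ α with rfl | hγ
    · simp
    · simp [Pi.single_eq_of_ne hγ, Pi.single_eq_of_ne ((raise_injective i).ne hγ)]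

lemma sum_coshift_comp_shift :
    ∑ i : Fin m, coshift E i ∘L shift E i = ContinuousLinearMap.id ℂ (Hardy m E) := by
  ext u α
  simp only [sum_apply, lp.coeFn_sum, Finset.sum_apply, ContinuousLinearMap.comp_apply,
    coshift_apply, shift_apply_raise, smul_smul, ← Finset.sum_smul, ← sq]
  have h : ∑ i, (shiftWeight i α : ℂ) ^ 2 = 1 := by exact_mod_cast sum_shiftWeight_sq α
  rw [h, one_smul, ContinuousLinearMap.id_apply]

variable (E) in
/-- The diagonal operator with the weights `degreeInv`. -/
noncomputable def degreeInvOp : Hardy m E →L[ℂ] Hardy m E :=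
  diagonal E degreeInv abs_degreeInv_le_one

lemma coshift_comp_shift_sub_shift_comp_coshift_self (i : Fin m) :
    coshift E i ∘L shift E i - shift E i ∘L coshift E i =
      degreeInvOp E - degreeInvOp E ∘L shift E i ∘L coshift E i := by
  ext u α
  simp only [sub_apply, lp.coeFn_sub, Pi.sub_apply, ContinuousLinearMap.comp_apply, degreeInvOp,
    coshift_apply, diagonal_apply, shift_apply_raise, smul_smul]
  by_cases h : α i = 0
  · have hw : (shiftWeight i α : ℂ) * shiftWeight i α = degreeInv α := by
      rw [← sq]
      exact_mod_cast (shiftWeight_sq i α).trans (by rw [h, Nat.cast_zero, zero_add, one_mul])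
    rw [hw, shift_apply_eq_zero h, smul_zero]
  · obtain ⟨β, rfl⟩ := exists_eq_raise h
    simp only [shift_apply_raise, coshift_apply, smul_smul, ← sub_smul]
    congr 1
    norm_cast
    simp only [← sq, shiftWeight_sq, raise_apply_self]
    push_cast
    linear_combination (-(β i : ℝ) - 1) * degreeInv_sub_degreeInv_raise i β

lemma coshift_comp_shift_sub_shift_comp_coshift_of_ne {i j : Fin m} (hij : i ≠ j) :
    coshift E j ∘L shift E i - shift E i ∘L coshift E j =
      -(degreeInvOp E ∘L shift E i ∘L coshift E j) := by
  ext u α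
  simp only [sub_apply, neg_apply, lp.coeFn_sub, lp.coeFn_neg, Pi.sub_apply, Pi.neg_apply,
    ContinuousLinearMap.comp_apply, degreeInvOp, coshift_apply, diagonal_apply]
  by_cases h : α i = 0
  · have h' : raise j α i = 0 := by rw [raise_apply_of_ne hij, h]
    simp [shift_apply_eq_zero h, shift_apply_eq_zero h']
  · obtain ⟨β, rfl⟩ := exists_eq_raise h
    rw [raise_comm, shift_apply_raise, shift_apply_raise, coshift_apply]
    simp only [smul_smul, ← sub_smul, ← neg_smul]
    congr 1
    norm_cast
    rw [shiftWeight_raise_mul_shiftWeight_raise hij]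
    ring

lemma isCompactOperator_coshift_comp_shift_sub [FiniteDimensional ℂ E] (i j : Fin m) :
    IsCompactOperator (coshift E j ∘L shift E i - shift E i ∘L coshift E j) := by
  have h : IsCompactOperator (degreeInvOp (m := m) E) :=
    isCompactOperator_diagonal _ tendsto_degreeInv_cofinite
  rcases eq_or_ne i j with rfl | hij
  · rw [coshift_comp_shift_sub_shift_comp_coshift_self]
    exact h.sub (h.comp_clm _)
  · rw [coshift_comp_shift_sub_shift_comp_coshift_of_ne hij]
    exact (h.comp_clm _).neg

end Shift

/-! ### Gaussian integrals of polynomials -/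

section Gaussian

/-- The standard complex Gaussian measure, with density `π⁻¹ exp (-‖z‖²)`. -/
noncomputable def complexGaussian : Measure ℂ :=
  volume.withDensity fun z => ENNReal.ofReal (π⁻¹ * Real.exp (-‖z‖ ^ 2))

lemma gaussianDensity_nonneg (z : ℂ) : 0 ≤ π⁻¹ * Real.exp (-‖z‖ ^ 2) := by positivity

lemma measurable_gaussianDensity :
    Measurable fun z : ℂ => ENNReal.ofReal (π⁻¹ * Real.exp (-‖z‖ ^ 2)) := by fun_prop

lemma integral_complexGaussian {F : Type*} [NormedAddCommGroup F] [NormedSpace ℝ F] (f : ℂ → F) :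
    ∫ z, f z ∂complexGaussian = ∫ z, (π⁻¹ * Real.exp (-‖z‖ ^ 2)) • f z := by
  rw [complexGaussian, integral_withDensity_eq_integral_toReal_smul measurable_gaussianDensity
    (by simp)]
  simp only [ENNReal.toReal_ofReal (gaussianDensity_nonneg _)]

lemma integral_norm_pow_complexGaussian (a : ℕ) :
    ∫ z, ‖z‖ ^ a ∂complexGaussian = Real.Gamma ((a + 2) / 2) := by
  have h := Complex.integral_rpow_mul_exp_neg_rpow (p := 2) (q := a) (by norm_num)
    (by linarith [(Nat.cast_nonneg a : (0 : ℝ) ≤ a)])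
  simp only [Real.rpow_natCast, Real.rpow_ofNat] at h
  simp only [integral_complexGaussian, smul_eq_mul, mul_assoc, integral_const_mul]
  simp only [mul_comm (Real.exp _), h]
  field_simp

lemma integrable_norm_pow_complexGaussian (a : ℕ) :
    Integrable (fun z => ‖z‖ ^ a) complexGaussian := by
  by_contra h
  have hΓ := integral_norm_pow_complexGaussian a
  rw [integral_undef h] at hΓ
  exact (Real.Gamma_pos_of_pos (by positivity)).ne hΓ

instance : IsFiniteMeasure complexGaussian := by
  have h := integrable_norm_pow_complexGaussian 0
  simp only [pow_zero, integrable_const_iff, one_ne_zero, false_or] at h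
  exact h

lemma integrable_conj_pow_mul_pow_complexGaussian (a b : ℕ) :
    Integrable (fun z => conj z ^ a * z ^ b) complexGaussian := by
  refine (integrable_norm_pow_complexGaussian (a + b)).mono' (by fun_prop) (.of_forall fun z => ?_)
  simp [pow_add]

lemma integral_conj_pow_mul_pow_self_complexGaussian (a : ℕ) :
    ∫ z, conj z ^ a * z ^ a ∂complexGaussian = a.factorial := by
  have h (z : ℂ) : conj z ^ a * z ^ a = ((‖z‖ ^ (2 * a) : ℝ) : ℂ) := by
    rw [← mul_pow, Complex.conj_mul', pow_mul]
    push_cast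
    rfl
  simp only [h, integral_complex_ofReal, integral_norm_pow_complexGaussian]
  rw [← Complex.ofReal_natCast, ← Real.Gamma_nat_eq_factorial]
  push_cast
  ring_nf

lemma integral_comp_rotation_complexGaussian {F : Type*} [NormedAddCommGroup F] [NormedSpace ℝ F]
    (c : Circle) (f : ℂ → F) :
    ∫ z, f (c * z) ∂complexGaussian = ∫ z, f z ∂complexGaussian := by
  have h := (rotation c).measurePreserving.integral_comp'
    (f := (rotation c).toHomeomorph.toMeasurableEquiv)
    (fun z => (π⁻¹ * Real.exp (-‖z‖ ^ 2)) • f z)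
  simpa only [integral_complexGaussian, Homeomorph.toMeasurableEquiv_coe,
    LinearIsometryEquiv.coe_toHomeomorph, rotation_apply, norm_mul, Circle.norm_coe,
    one_mul] using h

lemma exists_circle_conj_pow_mul_pow_eq_neg_one {a b : ℕ} (hab : a ≠ b) :
    ∃ c : Circle, conj (c : ℂ) ^ a * (c : ℂ) ^ b = -1 := by
  have hne : (b : ℝ) - a ≠ 0 := sub_ne_zero.2 (Nat.cast_injective.ne hab.symm)
  refine ⟨Circle.exp (π / (b - a)), ?_⟩
  rw [Circle.coe_exp, ← Complex.exp_conj, ← Complex.exp_nat_mul, ← Complex.exp_nat_mul,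
    ← Complex.exp_add, ← Complex.exp_pi_mul_I]
  congr 1
  have hπ : ((π / (b - a) : ℝ) : ℂ) * (b - a) = π := by exact_mod_cast div_mul_cancel₀ π hne
  rw [map_mul, Complex.conj_ofReal, Complex.conj_I]
  linear_combination Complex.I * hπ

lemma integral_conj_pow_mul_pow_complexGaussian_of_ne {a b : ℕ} (hab : a ≠ b) :
    ∫ z, conj z ^ a * z ^ b ∂complexGaussian = 0 := by
  obtain ⟨c, hc⟩ := exists_circle_conj_pow_mul_pow_eq_neg_one hab
  have h := integral_comp_rotation_complexGaussian c fun z => conj z ^ a * z ^ b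
  have hrot (z : ℂ) : conj (c * z) ^ a * (c * z) ^ b = -1 * (conj z ^ a * z ^ b) := by
    rw [← hc, map_mul]
    ring
  simp only [hrot, integral_const_mul] at h
  linear_combination (-1 / 2 : ℂ) * h

end Gaussian

section Fock

variable {m : ℕ}

/-- The standard Gaussian measure on `ℂ^m`. -/
noncomputable def gaussianPi (m : ℕ) : Measure (Fin m → ℂ) := Measure.pi fun _ => complexGaussian

instance : IsFiniteMeasure (gaussianPi m) := by unfold gaussianPi; infer_instance

/-- The monomial `z^α / √(α!)`; these are orthonormal for the Gaussian measure. -/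
noncomputable def fockMonomial (α : Fin m → ℕ) (z : Fin m → ℂ) : ℂ :=
  ∏ i, z i ^ α i / (√(α i).factorial : ℝ)

lemma fockMonomial_raise (i : Fin m) (α : Fin m → ℕ) (z : Fin m → ℂ) :
    (√(α i + 1) : ℂ) * fockMonomial (raise i α) z = z i * fockMonomial α z := by
  simp only [fockMonomial]
  rw [← Finset.mul_prod_erase _ _ (Finset.mem_univ i),
    ← Finset.mul_prod_erase _ (fun j => z j ^ α j / _) (Finset.mem_univ i)]
  have hprod : ∀ j ∈ Finset.univ.erase i, z j ^ raise i α j / (√(raise i α j).factorial : ℝ)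
      = z j ^ α j / (√(α j).factorial : ℝ) := fun j hj => by
    rw [raise_apply_of_ne (Finset.ne_of_mem_erase hj)]
  have hne : ((√(α i + 1) : ℝ) : ℂ) ≠ 0 := by
    exact_mod_cast (Real.sqrt_pos.2 (by positivity)).ne'
  rw [Finset.prod_congr rfl hprod, raise_apply_self, Nat.factorial_succ]
  push_cast
  rw [Real.sqrt_mul (by positivity), pow_succ]
  push_cast
  field_simp

lemma conj_fockMonomial_mul_fockMonomial (α β : Fin m → ℕ) (z : Fin m → ℂ) :
    conj (fockMonomial α z) * fockMonomial β z = ∏ i, (√(α i).factorial * √(β i).factorial : ℂ)⁻¹ *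
      (conj (z i) ^ α i * z i ^ β i) := by
  simp only [fockMonomial, map_prod, ← Finset.prod_mul_distrib]
  refine Finset.prod_congr rfl fun i _ => ?_
  simp only [map_div₀, map_pow, Complex.conj_ofReal, mul_inv]
  ring

lemma integrable_conj_fockMonomial_mul (α β : Fin m → ℕ) :
    Integrable (fun z => conj (fockMonomial α z) * fockMonomial β z) (gaussianPi m) := by
  simp only [conj_fockMonomial_mul_fockMonomial]
  exact Integrable.fintype_prod fun i =>
    (integrable_conj_pow_mul_pow_complexGaussian _ _).const_mul _

lemma integral_conj_fockMonomial_mul (α β : Fin m → ℕ) :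
    ∫ z, conj (fockMonomial α z) * fockMonomial β z ∂gaussianPi m = if α = β then 1 else 0 := by
  simp only [conj_fockMonomial_mul_fockMonomial, gaussianPi]
  rw [integral_fintype_prod_eq_prod (f := fun i z => (√(α i).factorial * √(β i).factorial : ℂ)⁻¹ *
      (conj z ^ α i * z ^ β i))]
  simp only [integral_const_mul]
  split_ifs with h
  · subst h
    refine Finset.prod_eq_one fun i _ => ?_
    rw [integral_conj_pow_mul_pow_self_complexGaussian, ← Complex.ofReal_mul,
      Real.mul_self_sqrt (by positivity), Complex.ofReal_natCast]
    exact inv_mul_cancel₀ (Nat.cast_ne_zero.2 (Nat.factorial_ne_zero _))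
  · obtain ⟨i, hi⟩ := Function.ne_iff.1 h
    refine Finset.prod_eq_zero (Finset.mem_univ i) ?_
    rw [integral_conj_pow_mul_pow_complexGaussian_of_ne hi, mul_zero]

end Fock

/-! ### Toeplitz operators with linear symbols -/

section FockPolynomial

variable {m : ℕ} {E : Type*} [NormedAddCommGroup E] [InnerProductSpace ℂ E]

/-- The polynomial on `ℂ^m` with prescribed coefficients with respect to `fockMonomial`. -/
noncomputable def fockPoly : ((Fin m → ℕ) →₀ E) →ₗ[ℂ] (Fin m → ℂ) → E :=
  Finsupp.lsum ℂ fun α => LinearMap.pi fun z => fockMonomial α z • LinearMap.id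

@[simp]
lemma fockPoly_single (α : Fin m → ℕ) (x : E) (z : Fin m → ℂ) :
    fockPoly (Finsupp.single α x) z = fockMonomial α z • x := by
  simp [fockPoly]

/-- The element of the Hardy space with prescribed coefficients. -/
noncomputable def hardyPoly : ((Fin m → ℕ) →₀ E) →ₗ[ℂ] Hardy m E :=
  Finsupp.lsum ℂ fun α => lp.lsingle (E := fun _ => E) 2 α

@[simp]
lemma hardyPoly_single (α : Fin m → ℕ) (x : E) :
    hardyPoly (Finsupp.single α x) = lp.single 2 α x := by
  simp [hardyPoly]

lemma denseRange_hardyPoly : DenseRange (hardyPoly (m := m) (E := E)) := fun u => by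
  refine mem_closure_of_tendsto (lp.hasSum_single (by simp) u) (.of_forall fun s => ?_)
  exact ⟨∑ α ∈ s, Finsupp.single α (u α), by simp⟩

/-- Multiplication by the `i`-th coordinate, on coefficients with respect to `fockMonomial`. -/
noncomputable def mulCoord (i : Fin m) : ((Fin m → ℕ) →₀ E) →ₗ[ℂ] (Fin m → ℕ) →₀ E :=
  Finsupp.lsum ℂ fun α => (√(α i + 1) : ℂ) • Finsupp.lsingle (raise i α)

@[simp]
lemma mulCoord_single (i : Fin m) (α : Fin m → ℕ) (x : E) :
    mulCoord i (Finsupp.single α x) = Finsupp.single (raise i α) ((√(α i + 1) : ℂ) • x) := by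
  simp [mulCoord]

lemma fockPoly_mulCoord (i : Fin m) (w : (Fin m → ℕ) →₀ E) (z : Fin m → ℂ) :
    fockPoly (mulCoord i w) z = z i • fockPoly w z := by
  induction w using Finsupp.induction_linear with
  | zero => simp
  | add v w hv hw => simp [hv, hw]
  | single α x =>
    simp only [mulCoord_single, fockPoly_single, smul_smul, ← fockMonomial_raise, mul_comm]

lemma inner_smul_fockMonomial (a b : E →L[ℂ] E) (α β : Fin m → ℕ) (x y : E) (z : Fin m → ℂ) :
    ⟪a (fockMonomial α z • x), b (fockMonomial β z • y)⟫_ℂ =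
      conj (fockMonomial α z) * fockMonomial β z * ⟪a x, b y⟫_ℂ := by
  rw [map_smul, map_smul, inner_smul_left, inner_smul_right, mul_assoc]

lemma integrable_inner_fockPoly (a b : E →L[ℂ] E) (v w : (Fin m → ℕ) →₀ E) :
    Integrable (fun z => ⟪a (fockPoly v z), b (fockPoly w z)⟫_ℂ) (gaussianPi m) := by
  induction v using Finsupp.induction_linear with
  | zero => simp
  | add v₁ v₂ h₁ h₂ =>
    simp only [map_add, Pi.add_apply, inner_add_left]
    exact h₁.add h₂
  | single α x =>
    induction w using Finsupp.induction_linear with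
    | zero => simp
    | add w₁ w₂ h₁ h₂ =>
      simp only [map_add, Pi.add_apply, inner_add_right]
      exact h₁.add h₂
    | single β y =>
      simpa only [fockPoly_single, inner_smul_fockMonomial] using
        (integrable_conj_fockMonomial_mul α β).mul_const _

lemma pointwise_single {ι : Type*} [DecidableEq ι] (a : E →L[ℂ] E) (i : ι) (x : E) :
    pointwise ι a (lp.single 2 i x) = lp.single 2 i (a x) := by
  ext j
  rcases eq_or_ne j i with rfl | h
  · simp
  · simp [Pi.single_eq_of_ne h]

lemma integral_inner_fockPoly (a b : E →L[ℂ] E) (v w : (Fin m → ℕ) →₀ E) :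
    ∫ z, ⟪a (fockPoly v z), b (fockPoly w z)⟫_ℂ ∂gaussianPi m =
      ⟪pointwise _ a (hardyPoly v), pointwise _ b (hardyPoly w)⟫_ℂ := by
  induction v using Finsupp.induction_linear with
  | zero => simp
  | add v₁ v₂ h₁ h₂ =>
    simp only [map_add, Pi.add_apply, inner_add_left]
    rw [integral_add (integrable_inner_fockPoly a b v₁ w) (integrable_inner_fockPoly a b v₂ w),
      h₁, h₂]
  | single α x =>
    induction w using Finsupp.induction_linear with
    | zero => simp
    | add w₁ w₂ h₁ h₂ =>
      simp only [map_add, Pi.add_apply, inner_add_right]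
      rw [integral_add (integrable_inner_fockPoly a b _ w₁) (integrable_inner_fockPoly a b _ w₂),
        h₁, h₂]
    | single β y =>
      simp only [fockPoly_single, inner_smul_fockMonomial, integral_mul_const,
        integral_conj_fockMonomial_mul, hardyPoly_single, pointwise_single, lp.inner_single_left]
      rcases eq_or_ne α β with rfl | h
      · simp
      · simp [h]

/-- The rescaling of coefficients by `√(1 / (|α| + m))`, which turns Gaussian norms of
`zᵢ f` into norms in the Hardy space. -/
noncomputable def rescale : ((Fin m → ℕ) →₀ E) →ₗ[ℂ] (Fin m → ℕ) →₀ E :=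
  Finsupp.lsum ℂ fun α => (√(degreeInv α) : ℂ) • Finsupp.lsingle α

@[simp]
lemma rescale_single (α : Fin m → ℕ) (x : E) :
    rescale (Finsupp.single α x) = Finsupp.single α ((√(degreeInv α) : ℂ) • x) := by
  simp [rescale]

lemma shiftWeight_eq_mul (i : Fin m) (α : Fin m → ℕ) :
    (shiftWeight i α : ℂ) = √(α i + 1) * √(degreeInv α) := by
  rw [shiftWeight, Real.sqrt_mul (by positivity), Complex.ofReal_mul]

variable [NeZero m]

lemma hardyPoly_mulCoord_rescale [CompleteSpace E] (i : Fin m) (w : (Fin m → ℕ) →₀ E) :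
    hardyPoly (mulCoord i (rescale w)) = shift E i (hardyPoly w) := by
  induction w using Finsupp.induction_linear with
  | zero => simp
  | add v w hv hw => simp only [map_add, hv, hw]
  | single α x =>
    rw [rescale_single, mulCoord_single, hardyPoly_single, hardyPoly_single, shift_single,
      smul_smul, shiftWeight_eq_mul]

lemma sqrt_degreeInv_raise (i : Fin m) (α : Fin m → ℕ) :
    √(degreeInv (raise i α)) = √(1 - degreeInv (raise i α)) * √(degreeInv α) := by
  rw [← Real.sqrt_mul (sub_nonneg.2 (degreeInv_le_one _))]
  congr 1
  linear_combination -degreeInv_sub_degreeInv_raise i α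

lemma inner_hardyPoly_mulCoord_mulCoord_rescale [CompleteSpace E] (a b : E →L[ℂ] E) (i j : Fin m)
    (v w : (Fin m → ℕ) →₀ E) :
    ⟪pointwise _ a (hardyPoly (mulCoord i (mulCoord j (rescale v)))),
        pointwise _ b (hardyPoly (rescale w))⟫_ℂ =
      ⟪pointwise _ a (gaussianCorrection E (shift E i (shift E j (hardyPoly v)))),
        pointwise _ b (hardyPoly w)⟫_ℂ := by
  induction v using Finsupp.induction_linear with
  | zero => simp
  | add v₁ v₂ h₁ h₂ => simp only [map_add, inner_add_left, h₁, h₂]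
  | single α x =>
    induction w using Finsupp.induction_linear with
    | zero => simp
    | add w₁ w₂ h₁ h₂ => simp only [map_add, inner_add_right, h₁, h₂]
    | single β y =>
      simp only [rescale_single, mulCoord_single, hardyPoly_single, shift_single, pointwise_single,
        smul_smul, lp.inner_single_right, pointwise_apply, gaussianCorrection, diagonal_apply,
        lp.single_apply]
      rcases eq_or_ne β (raise i (raise j α)) with rfl | h
      · simp only [Pi.single_eq_same, map_smul, inner_smul_left, inner_smul_right,
          shiftWeight_eq_mul, sqrt_degreeInv_raise i (raise j α), map_mul, Complex.conj_ofReal]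
        push_cast
        ring
      · simp [Pi.single_eq_of_ne h]

end FockPolynomial

section Toeplitz

variable {m : ℕ} {E : Type*} [NormedAddCommGroup E] [InnerProductSpace ℂ E]

lemma norm_sum_add_sq {ι : Type*} [Fintype ι] (x y : ι → E) :
    ‖∑ i, (x i + y i)‖ ^ 2 =
      ∑ i, ∑ j, (⟪x i, x j⟫_ℂ + 2 * ⟪x i, y j⟫_ℂ + ⟪y i, y j⟫_ℂ).re := by
  have hcross : ∑ i, ∑ j, (⟪y i, x j⟫_ℂ).re = ∑ i, ∑ j, (⟪x i, y j⟫_ℂ).re := by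
    rw [Finset.sum_comm]
    exact Finset.sum_congr rfl fun i _ => Finset.sum_congr rfl fun j _ =>
      inner_re_symm (𝕜 := ℂ) _ _
  rw [← inner_self_eq_norm_sq (𝕜 := ℂ), sum_inner]
  simp only [inner_sum, inner_add_left, inner_add_right, two_mul, Complex.add_re,
    RCLike.re_eq_complex_re, Complex.re_sum, Finset.sum_add_distrib, hcross]
  ring

lemma norm_sum_smul_add_conj_smul_sq (A B : Fin m → E →L[ℂ] E) (z : Fin m → ℂ) (x : E) :
    ‖∑ i, (A i (z i • x) + B i (conj (z i) • x))‖ ^ 2 =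
      ∑ i, ∑ j, (⟪A i (z i • x), A j (z j • x)⟫_ℂ + 2 * ⟪A i (z j • z i • x), B j x⟫_ℂ +
        ⟪B i (z j • x), B j (z i • x)⟫_ℂ).re := by
  rw [norm_sum_add_sq]
  refine Finset.sum_congr rfl fun i _ => Finset.sum_congr rfl fun j _ => ?_
  simp only [map_smul, inner_smul_left, inner_smul_right, Complex.conj_conj]
  ring_nf

variable [NeZero m] [CompleteSpace E]

/-- The Toeplitz operator with symbol `z ↦ ∑ᵢ (zᵢ Aᵢ + z̄ᵢ Bᵢ)`. -/
noncomputable def toeplitz (A B : Fin m → E →L[ℂ] E) : Hardy m E →L[ℂ] Hardy m E :=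
  ∑ i, (pointwise _ (A i) ∘L shift E i + pointwise _ (B i) ∘L coshift E i)

lemma adjoint_toeplitz (A B : Fin m → E →L[ℂ] E) :
    adjoint (toeplitz A B) = toeplitz (fun i => adjoint (B i)) fun i => adjoint (A i) := by
  simp only [toeplitz, map_sum, map_add, ContinuousLinearMap.adjoint_comp, adjoint_shift,
    adjoint_coshift, adjoint_pointwise, shift_comp_pointwise, coshift_comp_pointwise]
  exact Finset.sum_congr rfl fun i _ => add_comm _ _

/-- The compact defect between the quadratic form `‖T u‖²` of a Toeplitz operator and the Gaussian
integral of the squared norm of its symbol. -/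
noncomputable def toeplitzDefect (A B : Fin m → E →L[ℂ] E) : Hardy m E →L[ℂ] Hardy m E :=
  ∑ i, ∑ j, pointwise _ (adjoint (B j)) ∘L
    ((2 : ℂ) • pointwise _ (A i) ∘L
        (gaussianCorrection E - ContinuousLinearMap.id ℂ _) ∘L shift E j ∘L shift E i +
      pointwise _ (B i) ∘L (coshift E i ∘L shift E j - shift E j ∘L coshift E i))

lemma isCompactOperator_sum {X Y ι : Type*} [NormedAddCommGroup X] [NormedSpace ℂ X]
    [NormedAddCommGroup Y] [NormedSpace ℂ Y] (s : Finset ι) {K : ι → X →L[ℂ] Y}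
    (hK : ∀ i ∈ s, IsCompactOperator (K i)) : IsCompactOperator (∑ i ∈ s, K i : X →L[ℂ] Y) :=
  Submodule.sum_mem (compactOperator (RingHom.id ℂ) X Y) hK

lemma isCompactOperator_toeplitzDefect [FiniteDimensional ℂ E] (A B : Fin m → E →L[ℂ] E) :
    IsCompactOperator (toeplitzDefect A B) := by
  refine isCompactOperator_sum _ fun i _ => isCompactOperator_sum _ fun j _ => ?_
  have hQ : IsCompactOperator
      (gaussianCorrection E - ContinuousLinearMap.id ℂ _ : Hardy m E →L[ℂ] Hardy m E) := by
    rw [← neg_sub]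
    exact isCompactOperator_id_sub_gaussianCorrection.neg
  have hA := ((hQ.comp_clm (shift E j ∘L shift E i)).clm_comp (pointwise _ (A i))).smul (2 : ℂ)
  have hB := (isCompactOperator_coshift_comp_shift_sub j i).clm_comp (pointwise _ (B i))
  exact (hA.add hB).clm_comp (pointwise _ (adjoint (B j)))

lemma norm_toeplitz_sq_add (A B : Fin m → E →L[ℂ] E) (u : Hardy m E) :
    ‖toeplitz A B u‖ ^ 2 + (⟪toeplitzDefect A B u, u⟫_ℂ).re =
      ∑ i, ∑ j, (⟪pointwise _ (A i) (shift E i u), pointwise _ (A j) (shift E j u)⟫_ℂ +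
        2 * ⟪pointwise _ (A i) (gaussianCorrection E (shift E j (shift E i u))),
          pointwise _ (B j) u⟫_ℂ +
        ⟪pointwise _ (B i) (shift E j u), pointwise _ (B j) (shift E i u)⟫_ℂ).re := by
  have hcoshift (v : Hardy m E) (b : E →L[ℂ] E) (j : Fin m) :
      ⟪v, pointwise _ b (coshift E j u)⟫_ℂ = ⟪shift E j v, pointwise _ b u⟫_ℂ := by
    rw [shift, ContinuousLinearMap.adjoint_inner_left, ← ContinuousLinearMap.comp_apply,
      ← coshift_comp_pointwise, ContinuousLinearMap.comp_apply]
  have hcomm (a : E →L[ℂ] E) (j : Fin m) (v : Hardy m E) :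
      shift E j (pointwise _ a v) = pointwise _ a (shift E j v) :=
    DFunLike.congr_fun (shift_comp_pointwise a j) v
  simp only [toeplitz, toeplitzDefect, sum_apply, add_apply, ContinuousLinearMap.comp_apply,
    norm_sum_add_sq, sum_inner, Complex.re_sum, ← Finset.sum_add_distrib, ← Complex.add_re]
  refine Finset.sum_congr rfl fun i _ => Finset.sum_congr rfl fun j _ => congrArg Complex.re ?_
  simp only [hcoshift, hcomm, ← adjoint_pointwise, ContinuousLinearMap.adjoint_inner_left,
    smul_apply, ContinuousLinearMap.comp_apply, sub_apply, map_sub, inner_add_left, inner_sub_left,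
    inner_smul_left, ContinuousLinearMap.id_apply, map_ofNat]
  have hB : ⟪pointwise _ (B i) (coshift E i (shift E j u)), pointwise _ (B j) u⟫_ℂ =
      ⟪pointwise _ (B i) (shift E j u), pointwise _ (B j) (shift E i u)⟫_ℂ := by
    rw [← hcomm (B j)]
    refine Eq.trans ?_ (ContinuousLinearMap.adjoint_inner_right (coshift E i) _ _).symm
    exact congrArg (⟪·, _⟫_ℂ) (DFunLike.congr_fun (coshift_comp_pointwise (B i) i) _).symm
  rw [hB]
  ring

/-- Ellipticity of the symbol `z ↦ ∑ᵢ (zᵢ Aᵢ + z̄ᵢ Bᵢ)`, with a quantitative constant. -/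
def SymbolBoundedBelow (A B : Fin m → E →L[ℂ] E) : Prop :=
  ∃ c > 0, ∀ (z : Fin m → ℂ) (x : E),
    c * ((∑ i, ‖z i‖ ^ 2) * ‖x‖ ^ 2) ≤ ‖∑ i, (A i (z i • x) + B i (conj (z i) • x))‖ ^ 2

lemma integral_norm_symbol_sq (A B : Fin m → E →L[ℂ] E) (w : (Fin m → ℕ) →₀ E) :
    Integrable (fun z => ‖∑ i, (A i (z i • fockPoly (rescale w) z) +
      B i (conj (z i) • fockPoly (rescale w) z))‖ ^ 2) (gaussianPi m) ∧
    ∫ z, ‖∑ i, (A i (z i • fockPoly (rescale w) z) +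
        B i (conj (z i) • fockPoly (rescale w) z))‖ ^ 2 ∂gaussianPi m =
      ‖toeplitz A B (hardyPoly w)‖ ^ 2 +
        (⟪toeplitzDefect A B (hardyPoly w), hardyPoly w⟫_ℂ).re := by
  simp only [norm_sum_smul_add_conj_smul_sq]
  simp only [← fockPoly_mulCoord]
  have hinteg := integrable_inner_fockPoly (m := m) (E := E)
  have hI (i j : Fin m) : Integrable (fun z =>
      ⟪A i (fockPoly (mulCoord i (rescale w)) z), A j (fockPoly (mulCoord j (rescale w)) z)⟫_ℂ +
      2 * ⟪A i (fockPoly (mulCoord j (mulCoord i (rescale w))) z),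
        B j (fockPoly (rescale w) z)⟫_ℂ +
      ⟪B i (fockPoly (mulCoord j (rescale w)) z), B j (fockPoly (mulCoord i (rescale w)) z)⟫_ℂ)
      (gaussianPi m) :=
    ((hinteg _ _ _ _).add ((hinteg _ _ _ _).const_mul 2)).add (hinteg _ _ _ _)
  have hre (i j : Fin m) := (hI i j).re
  simp only [RCLike.re_eq_complex_re] at hre
  refine ⟨integrable_finsetSum _ fun i _ => integrable_finsetSum _ fun j _ => hre i j, ?_⟩
  rw [integral_finsetSum _ fun i _ => integrable_finsetSum _ fun j _ => hre i j,
    norm_toeplitz_sq_add]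
  refine Finset.sum_congr rfl fun i _ => ?_
  rw [integral_finsetSum _ fun j _ => hre i j]
  refine Finset.sum_congr rfl fun j _ => (integral_re (hI i j)).trans (congrArg Complex.re ?_)
  refine (integral_add ((hinteg _ _ _ _).add ((hinteg _ _ _ _).const_mul 2))
    (hinteg _ _ _ _)).trans ?_
  simp only [Pi.add_apply]
  rw [integral_add (hinteg _ _ _ _) ((hinteg _ _ _ _).const_mul 2), integral_const_mul]
  simp only [integral_inner_fockPoly, hardyPoly_mulCoord_rescale,
    inner_hardyPoly_mulCoord_mulCoord_rescale]

lemma integral_sum_norm_sq_fockPoly (w : (Fin m → ℕ) →₀ E) :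
    Integrable (fun z => (∑ i, ‖z i‖ ^ 2) * ‖fockPoly (rescale w) z‖ ^ 2) (gaussianPi m) ∧
    ∫ z, (∑ i, ‖z i‖ ^ 2) * ‖fockPoly (rescale w) z‖ ^ 2 ∂gaussianPi m = ‖hardyPoly w‖ ^ 2 := by
  have hnorm (z : Fin m → ℂ) : (∑ i, ‖z i‖ ^ 2) * ‖fockPoly (rescale w) z‖ ^ 2 =
      ∑ i, (⟪ContinuousLinearMap.id ℂ E (fockPoly (mulCoord i (rescale w)) z),
        ContinuousLinearMap.id ℂ E (fockPoly (mulCoord i (rescale w)) z)⟫_ℂ).re := by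
    simp only [ContinuousLinearMap.id_apply, fockPoly_mulCoord, Finset.sum_mul,
      ← RCLike.re_eq_complex_re, inner_self_eq_norm_sq, norm_smul, mul_pow]
  have hI (i : Fin m) := (integrable_inner_fockPoly (ContinuousLinearMap.id ℂ E)
    (ContinuousLinearMap.id ℂ E) (mulCoord i (rescale w)) (mulCoord i (rescale w)))
  have hre (i : Fin m) := (hI i).re
  simp only [RCLike.re_eq_complex_re] at hre
  have hpw : pointwise (Fin m → ℕ) (ContinuousLinearMap.id ℂ E) = ContinuousLinearMap.id ℂ _ := by
    ext u α
    rfl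
  simp only [hnorm]
  refine ⟨integrable_finsetSum _ fun i _ => hre i, ?_⟩
  rw [integral_finsetSum _ fun i _ => hre i]
  calc ∑ i, ∫ z, (⟪ContinuousLinearMap.id ℂ E (fockPoly (mulCoord i (rescale w)) z),
        ContinuousLinearMap.id ℂ E (fockPoly (mulCoord i (rescale w)) z)⟫_ℂ).re ∂gaussianPi m
      = ∑ i, (⟪shift E i (hardyPoly w), shift E i (hardyPoly w)⟫_ℂ).re := by
        refine Finset.sum_congr rfl fun i _ => (integral_re (hI i)).trans ?_
        rw [integral_inner_fockPoly, hpw, hardyPoly_mulCoord_rescale]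
        rfl
    _ = (⟪(∑ i, coshift E i ∘L shift E i) (hardyPoly w), hardyPoly w⟫_ℂ).re := by
        simp only [sum_apply, sum_inner, Complex.re_sum, ContinuousLinearMap.comp_apply, shift,
          ContinuousLinearMap.adjoint_inner_right]
    _ = ‖hardyPoly w‖ ^ 2 := by
        rw [sum_coshift_comp_shift, ContinuousLinearMap.id_apply]
        exact inner_self_eq_norm_sq (𝕜 := ℂ) _

theorem SymbolBoundedBelow.essentiallyBoundedBelow_toeplitz [FiniteDimensional ℂ E]
    {A B : Fin m → E →L[ℂ] E} (h : SymbolBoundedBelow A B) :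
    EssentiallyBoundedBelow (toeplitz A B) := by
  obtain ⟨c, hc, hbound⟩ := h
  refine ⟨c, hc, toeplitzDefect A B, isCompactOperator_toeplitzDefect A B, fun u => ?_⟩
  refine denseRange_hardyPoly.induction_on (p := fun u => c * ‖u‖ ^ 2 ≤ ‖toeplitz A B u‖ ^ 2 +
    (⟪toeplitzDefect A B u, u⟫_ℂ).re) u ?_ fun w => ?_
  · exact isClosed_le (by fun_prop) (by fun_prop)
  obtain ⟨hinteg, heq⟩ := integral_norm_symbol_sq A B w
  obtain ⟨hinteg', heq'⟩ := integral_sum_norm_sq_fockPoly w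
  rw [← heq, ← heq', ← integral_const_mul]
  exact integral_mono (hinteg'.const_mul c) hinteg fun z => hbound z _

end Toeplitz

/-! ### Exterior algebra and Clifford matrices -/

section Toggle

variable {ι : Type*} [DecidableEq ι]

lemma symmDiff_singleton_of_mem {i : ι} {S : Finset ι} (h : i ∈ S) : S ∆ {i} = S.erase i := by
  ext k
  simp only [Finset.mem_symmDiff, Finset.mem_singleton, Finset.mem_erase]
  grind

lemma symmDiff_singleton_of_notMem {i : ι} {S : Finset ι} (h : i ∉ S) : S ∆ {i} = insert i S := by
  ext k
  simp only [Finset.mem_symmDiff, Finset.mem_singleton, Finset.mem_insert]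
  grind

lemma mem_symmDiff_singleton_self {i : ι} {S : Finset ι} : i ∈ S ∆ {i} ↔ i ∉ S := by
  simp [Finset.mem_symmDiff]

lemma mem_symmDiff_singleton_of_ne {i j : ι} (h : i ≠ j) {S : Finset ι} :
    i ∈ S ∆ {j} ↔ i ∈ S := by
  simp [Finset.mem_symmDiff, h]

lemma natCast_card_symmDiff_singleton (S : Finset ι) (i : ι) :
    ((S ∆ {i}).card : ZMod 2) = S.card + 1 := by
  by_cases h : i ∈ S
  · rw [symmDiff_singleton_of_mem h, ← Finset.card_erase_add_one h, Nat.cast_succ, add_assoc,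
      CharTwo.add_self_eq_zero, add_zero]
  · rw [symmDiff_singleton_of_notMem h, Finset.card_insert_of_notMem h, Nat.cast_succ]

end Toggle

section Exterior

variable {m : ℕ}

/-- The exterior algebra of `ℂ^m` with coefficients in `F`. The set `S` indexes the coefficient of
the wedge product of the basis vectors `e i`, `i ∈ S`, in increasing order. -/
abbrev Exterior (m : ℕ) (F : Type*) : Type _ := PiLp 2 fun _ : Finset (Fin m) => F

variable {F : Type*} [NormedAddCommGroup F] [InnerProductSpace ℂ F]

/-- The coefficientwise action on the exterior algebra of an operator on `F`. -/
noncomputable def mapCoeff (a : F →L[ℂ] F) : Exterior m F →L[ℂ] Exterior m F :=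
  (PiLp.continuousLinearEquiv 2 ℂ fun _ : Finset (Fin m) => F).symm ∘L
    ContinuousLinearMap.pi fun S => a ∘L PiLp.proj 2 (fun _ : Finset (Fin m) => F) S

@[simp]
lemma mapCoeff_apply (a : F →L[ℂ] F) (x : Exterior m F) (S : Finset (Fin m)) :
    mapCoeff a x S = a (x S) := rfl

lemma adjoint_mapCoeff [CompleteSpace F] (a : F →L[ℂ] F) :
    adjoint (mapCoeff (m := m) a) = mapCoeff (adjoint a) := by
  refine ((ContinuousLinearMap.eq_adjoint_iff _ _).2 fun x y => ?_).symm
  simp only [PiLp.inner_apply, mapCoeff_apply, ContinuousLinearMap.adjoint_inner_left]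

variable (F) in
/-- The operator that sends the coefficient at `φ S`, multiplied by `c S`, to the place `S`. -/
noncomputable def weightedReindex (c : Finset (Fin m) → ℂ) (φ : Finset (Fin m) → Finset (Fin m)) :
    Exterior m F →L[ℂ] Exterior m F :=
  (PiLp.continuousLinearEquiv 2 ℂ fun _ : Finset (Fin m) => F).symm ∘L
    ContinuousLinearMap.pi fun S => c S • PiLp.proj 2 (fun _ : Finset (Fin m) => F) (φ S)

@[simp]
lemma weightedReindex_apply (c : Finset (Fin m) → ℂ) (φ : Finset (Fin m) → Finset (Fin m))
    (x : Exterior m F) (S : Finset (Fin m)) : weightedReindex F c φ x S = c S • x (φ S) := rfl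

lemma mapCoeff_mul_weightedReindex (a : F →L[ℂ] F) (c : Finset (Fin m) → ℂ)
    (φ : Finset (Fin m) → Finset (Fin m)) :
    mapCoeff a * weightedReindex F c φ = weightedReindex F c φ * mapCoeff a := by
  ext x S
  exact map_smul a _ _

lemma adjoint_weightedReindex [CompleteSpace F] (c : Finset (Fin m) → ℂ)
    {φ : Finset (Fin m) → Finset (Fin m)} (hφ : Function.Involutive φ) :
    adjoint (weightedReindex F c φ) = weightedReindex F (fun S => conj (c (φ S))) φ := by
  refine ((ContinuousLinearMap.eq_adjoint_iff _ _).2 fun x y => ?_).symm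
  simp only [PiLp.inner_apply, weightedReindex_apply, inner_smul_left, inner_smul_right,
    Complex.conj_conj]
  refine Fintype.sum_equiv hφ.toPerm _ _ fun S => ?_
  simp only [Function.Involutive.coe_toPerm, hφ S]

end Exterior

section Clifford

variable {m : ℕ}

/-- The sign produced by moving the basis vector `e j` past the `e i` with `i ∈ S` and `i < j`. -/
noncomputable def koszulSign (j : Fin m) (S : Finset (Fin m)) : ℂ :=
  ∏ i ∈ S, if i < j then -1 else 1

lemma koszulSign_mul_self (j : Fin m) (S : Finset (Fin m)) :
    koszulSign j S * koszulSign j S = 1 := by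
  rw [koszulSign, ← Finset.prod_mul_distrib]
  exact Finset.prod_eq_one fun i _ => by split_ifs <;> norm_num

lemma conj_koszulSign (j : Fin m) (S : Finset (Fin m)) :
    conj (koszulSign j S) = koszulSign j S := by
  simp [koszulSign, apply_ite (starRingEnd ℂ)]

lemma koszulSign_symmDiff_singleton (i j : Fin m) (S : Finset (Fin m)) :
    koszulSign j (S ∆ {i}) = (if i < j then -1 else 1) * koszulSign j S := by
  by_cases h : i ∈ S
  · rw [symmDiff_singleton_of_mem h, koszulSign, koszulSign, ← Finset.mul_prod_erase S _ h,
      ← mul_assoc]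
    split_ifs <;> norm_num
  · rw [symmDiff_singleton_of_notMem h, koszulSign, koszulSign, Finset.prod_insert h]

lemma koszulSign_symmDiff_singleton_self (j : Fin m) (S : Finset (Fin m)) :
    koszulSign j (S ∆ {j}) = koszulSign j S := by
  simp [koszulSign_symmDiff_singleton]

lemma koszulSign_mul_koszulSign_symmDiff_add {i j : Fin m} (hij : i ≠ j) (S : Finset (Fin m)) :
    koszulSign i S * koszulSign j (S ∆ {i}) + koszulSign j S * koszulSign i (S ∆ {j}) = 0 := by
  simp only [koszulSign_symmDiff_singleton]
  rcases hij.lt_or_gt with h | h <;> simp only [h, h.not_gt, if_true, if_false] <;> ring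

variable (F : Type*) [NormedAddCommGroup F] [InnerProductSpace ℂ F]

/-- Exterior multiplication by the basis vector `e j`. -/
noncomputable def creation (j : Fin m) : Exterior m F →L[ℂ] Exterior m F :=
  weightedReindex F (fun S => if j ∈ S then koszulSign j S else 0) (· ∆ {j})

/-- Interior multiplication by the basis vector `e j`. -/
noncomputable def annihilation (j : Fin m) : Exterior m F →L[ℂ] Exterior m F :=
  weightedReindex F (fun S => if j ∈ S then 0 else koszulSign j S) (· ∆ {j})

variable {F}

lemma creation_apply (j : Fin m) (x : Exterior m F) (S : Finset (Fin m)) :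
    creation F j x S = if j ∈ S then koszulSign j S • x (S ∆ {j}) else 0 := by
  simp [creation]

lemma annihilation_apply (j : Fin m) (x : Exterior m F) (S : Finset (Fin m)) :
    annihilation F j x S = if j ∈ S then 0 else koszulSign j S • x (S ∆ {j}) := by
  simp [annihilation]

lemma annihilation_creation_apply (j : Fin m) (x : Exterior m F) (S : Finset (Fin m)) :
    annihilation F j (creation F j x) S = if j ∈ S then 0 else x S := by
  simp only [annihilation_apply, creation_apply, mem_symmDiff_singleton_self,
    koszulSign_symmDiff_singleton_self, symmDiff_symmDiff_cancel_right]
  by_cases h : j ∈ S <;> simp [h, smul_smul, koszulSign_mul_self]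

lemma creation_annihilation_apply (j : Fin m) (x : Exterior m F) (S : Finset (Fin m)) :
    creation F j (annihilation F j x) S = if j ∈ S then x S else 0 := by
  simp only [annihilation_apply, creation_apply, mem_symmDiff_singleton_self,
    koszulSign_symmDiff_singleton_self, symmDiff_symmDiff_cancel_right]
  by_cases h : j ∈ S <;> simp [h, smul_smul, koszulSign_mul_self]

lemma creation_mul_annihilation_add (i j : Fin m) :
    creation F i * annihilation F j + annihilation F j * creation F i = if i = j then 1 else 0 := by
  rcases eq_or_ne i j with rfl | hij
  · rw [if_pos rfl]
    ext x S
    simp only [add_apply, mul_apply_eq_comp, PiLp.add_apply,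
      creation_annihilation_apply, annihilation_creation_apply, one_apply_eq_self]
    split_ifs <;> simp
  · rw [if_neg hij]
    ext x S
    simp only [add_apply, mul_apply_eq_comp, PiLp.add_apply, creation_apply, annihilation_apply,
      mem_symmDiff_singleton_of_ne hij, mem_symmDiff_singleton_of_ne hij.symm,
      symmDiff_right_comm S {j} {i}]
    by_cases hi : i ∈ S <;> by_cases hj : j ∈ S <;>
      simp [hi, hj, smul_smul, ← add_smul, koszulSign_mul_koszulSign_symmDiff_add hij]

lemma annihilation_mul_annihilation_add (i j : Fin m) :
    annihilation F i * annihilation F j + annihilation F j * annihilation F i = 0 := by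
  ext x S
  simp only [add_apply, mul_apply_eq_comp, PiLp.add_apply, annihilation_apply]
  rcases eq_or_ne i j with rfl | hij
  · by_cases hi : i ∈ S <;> simp [hi, mem_symmDiff_singleton_self]
  · simp only [mem_symmDiff_singleton_of_ne hij, mem_symmDiff_singleton_of_ne hij.symm,
      symmDiff_right_comm S {j} {i}]
    by_cases hi : i ∈ S <;> by_cases hj : j ∈ S <;>
      simp [hi, hj, smul_smul, ← add_smul, koszulSign_mul_koszulSign_symmDiff_add hij]

section Adjoint

variable [CompleteSpace F]

lemma adjoint_creation (j : Fin m) : adjoint (creation F j) = annihilation F j := by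
  rw [creation, adjoint_weightedReindex _ fun S => symmDiff_symmDiff_cancel_right _ _,
    annihilation]
  congr 1
  funext S
  simp only [mem_symmDiff_singleton_self, koszulSign_symmDiff_singleton_self]
  split_ifs <;> simp_all [conj_koszulSign]

lemma adjoint_annihilation (j : Fin m) : adjoint (annihilation F j) = creation F j := by
  rw [← adjoint_creation, ContinuousLinearMap.adjoint_adjoint]

lemma creation_mul_creation_add (i j : Fin m) :
    creation F i * creation F j + creation F j * creation F i = 0 := by
  have h := congrArg adjoint (annihilation_mul_annihilation_add (F := F) j i)
  simpa only [map_add, map_zero, ContinuousLinearMap.mul_def, ContinuousLinearMap.adjoint_comp,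
    adjoint_annihilation] using h

end Adjoint

lemma sum_mul_sum_add_sum_mul_sum {ι κ R : Type*} [Fintype ι] [Fintype κ]
    [NonUnitalNonAssocSemiring R] (a : ι → R) (b : κ → R) :
    (∑ i, a i) * ∑ j, b j + (∑ j, b j) * ∑ i, a i = ∑ i, ∑ j, (a i * b j + b j * a i) := by
  simp only [Finset.sum_add_distrib, Finset.sum_mul_sum]
  rw [Finset.sum_comm (f := fun j i => b j * a i)]

variable (F) in
/-- Clifford multiplication by the vector of `ℂ^m` whose only nonzero coordinate is `w`,
in place `i`. -/
noncomputable def clifford (i : Fin m) (w : ℂ) : Exterior m F →L[ℂ] Exterior m F :=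
  w • annihilation F i + conj w • creation F i

variable [CompleteSpace F]

lemma adjoint_clifford (i : Fin m) (w : ℂ) : adjoint (clifford F i w) = clifford F i w := by
  rw [clifford, map_add, map_smulₛₗ, map_smulₛₗ, adjoint_annihilation, adjoint_creation,
    Complex.conj_conj, add_comm]

lemma clifford_mul_clifford_add (i j : Fin m) (z w : ℂ) :
    clifford F i z * clifford F j w + clifford F j w * clifford F i z =
      if i = j then (conj z * w + conj w * z) • 1 else 0 := by
  calc
    _ = (z * w) • (annihilation F i * annihilation F j + annihilation F j * annihilation F i) +
        (conj z * conj w) • (creation F i * creation F j + creation F j * creation F i) +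
        (conj z * w) • (creation F i * annihilation F j + annihilation F j * creation F i) +
        (conj w * z) • (creation F j * annihilation F i + annihilation F i * creation F j) := by
      simp only [clifford, mul_add, add_mul, smul_mul_smul_comm]
      module
    _ = _ := by
      rw [annihilation_mul_annihilation_add, creation_mul_creation_add,
        creation_mul_annihilation_add, creation_mul_annihilation_add]
      rcases eq_or_ne i j with rfl | hij
      · simp only [if_true]
        module
      · simp only [hij, hij.symm, if_false]
        module

lemma sum_clifford_mul_self (z : Fin m → ℂ) :
    (∑ i, clifford F i (z i)) * ∑ i, clifford F i (z i) = ((∑ i, ‖z i‖ ^ 2 : ℝ) : ℂ) • 1 := by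
  have hsum := sum_mul_sum_add_sum_mul_sum (fun i => clifford F i (z i)) fun i => clifford F i (z i)
  simp only [clifford_mul_clifford_add, Finset.sum_ite_eq, Finset.mem_univ, if_true,
    Complex.conj_mul', ← Finset.sum_smul, ← two_smul ℂ, smul_eq_mul, ← Finset.mul_sum] at hsum
  rw [mul_smul] at hsum
  simpa using smul_right_injective _ (two_ne_zero' ℂ) hsum

lemma symbolBoundedBelow_annihilation_creation :
    SymbolBoundedBelow (annihilation (m := m) F) (creation F) := by
  refine ⟨1, one_pos, fun z x => ?_⟩
  set c := ∑ i, clifford F i (z i) with hc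
  have happly : ∑ i, (annihilation F i (z i • x) + creation F i (conj (z i) • x)) = c x := by
    simp [hc, clifford, sum_apply]
  have hsq : adjoint c ∘L c = ((∑ i, ‖z i‖ ^ 2 : ℝ) : ℂ) • 1 := by
    rw [hc, map_sum, ← sum_clifford_mul_self]
    simp only [adjoint_clifford, ContinuousLinearMap.mul_def]
  rw [happly, c.apply_norm_sq_eq_inner_adjoint_left, hsq, one_mul, smul_apply,
    one_apply_eq_self, inner_smul_left, Complex.conj_ofReal, RCLike.re_to_complex,
    Complex.re_ofReal_mul, ← RCLike.re_to_complex, inner_self_eq_norm_sq]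

end Clifford

/-! ### Toeplitz operators with exterior coefficients -/

section Ellipticity

lemma exists_pos_mul_norm_mul_norm_le {E F G : Type*} [NormedAddCommGroup E] [NormedSpace ℝ E]
    [FiniteDimensional ℝ E] [NormedAddCommGroup F] [NormedSpace ℝ F] [FiniteDimensional ℝ F]
    [NormedAddCommGroup G] [NormedSpace ℝ G] (b : E →ₗ[ℝ] F →ₗ[ℝ] G)
    (hb : ∀ x y, x ≠ 0 → y ≠ 0 → b x y ≠ 0) : ∃ c > 0, ∀ x y, c * (‖x‖ * ‖y‖) ≤ ‖b x y‖ := by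
  have : ProperSpace E := FiniteDimensional.proper ℝ E
  have : ProperSpace F := FiniteDimensional.proper ℝ F
  have hcont : Continuous fun p : E × F => ‖b p.1 p.2‖ := by
    have := b.toContinuousBilinearMap.continuous₂
    exact this.norm
  have hcompact := (isCompact_sphere (0 : E) 1).prod (isCompact_sphere (0 : F) 1)
  obtain ⟨c, hc, hle⟩ : ∃ c > 0, ∀ p ∈ Metric.sphere (0 : E) 1 ×ˢ Metric.sphere (0 : F) 1,
      c ≤ ‖b p.1 p.2‖ := by
    refine hcompact.exists_forall_le' hcont.continuousOn fun p hp => norm_pos_iff.2 (hb _ _ ?_ ?_)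
    · exact ne_zero_of_mem_unit_sphere ⟨p.1, hp.1⟩
    · exact ne_zero_of_mem_unit_sphere ⟨p.2, hp.2⟩
  refine ⟨c, hc, fun x y => ?_⟩
  rcases eq_or_ne x 0 with rfl | hx
  · simp
  rcases eq_or_ne y 0 with rfl | hy
  · simp
  have h := hle (‖x‖⁻¹ • x, ‖y‖⁻¹ • y) ⟨by simp [norm_smul, hx], by simp [norm_smul, hy]⟩
  simp only [map_smul, LinearMap.smul_apply, norm_smul, norm_inv, norm_norm] at h
  rw [← mul_assoc, ← mul_inv, inv_mul_eq_div, le_div_iff₀ (by positivity)] at h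
  linarith

variable {m : ℕ} {F : Type*} [NormedAddCommGroup F] [InnerProductSpace ℂ F]

lemma symbolBoundedBelow_of_ne_zero [FiniteDimensional ℂ F] {A B : Fin m → F →L[ℂ] F}
    (h : ∀ (z : Fin m → ℂ) (x : F), z ≠ 0 → x ≠ 0 →
      ∑ i, (A i (z i • x) + B i (conj (z i) • x)) ≠ 0) : SymbolBoundedBelow A B := by
  have : FiniteDimensional ℝ F := FiniteDimensional.complexToReal F
  let symbol : EuclideanSpace ℂ (Fin m) →ₗ[ℝ] F →ₗ[ℝ] F :=
    LinearMap.mk₂ ℝ (fun z x => ∑ i, (A i (z i • x) + B i (conj (z i) • x)))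
      (fun z w x => by
        rw [← Finset.sum_add_distrib]
        refine Finset.sum_congr rfl fun i _ => ?_
        simp only [PiLp.add_apply, map_add, add_smul]
        abel)
      (fun r z x => by
        simp only [PiLp.smul_apply, Finset.smul_sum, smul_add, ← Complex.coe_smul r, smul_eq_mul,
          map_mul, Complex.conj_ofReal, mul_smul, map_smul])
      (fun z x y => by
        rw [← Finset.sum_add_distrib]
        refine Finset.sum_congr rfl fun i _ => ?_
        simp only [map_add, smul_add]
        abel)
      (fun r z x => by
        simp only [Finset.smul_sum, smul_add, ← Complex.coe_smul r, map_smul, smul_comm (r : ℂ)])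
  obtain ⟨c, hc, hle⟩ := exists_pos_mul_norm_mul_norm_le symbol fun z x hz hx =>
    h z x (fun hz' => hz (PiLp.ext fun i => congrFun hz' i)) hx
  refine ⟨c ^ 2, by positivity, fun z x => ?_⟩
  have hz := EuclideanSpace.norm_sq_eq (WithLp.toLp 2 z)
  rw [← hz, ← mul_pow, ← mul_pow]
  exact pow_le_pow_left₀ (by positivity) (hle _ _) 2

lemma SymbolBoundedBelow.mapCoeff {A B : Fin m → F →L[ℂ] F} (h : SymbolBoundedBelow A B) :
    SymbolBoundedBelow (fun i => mapCoeff (m := m) (A i)) fun i => mapCoeff (B i) := by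
  obtain ⟨c, hc, hle⟩ := h
  refine ⟨c, hc, fun z x => ?_⟩
  rw [PiLp.norm_sq_eq_of_L2, PiLp.norm_sq_eq_of_L2, Finset.mul_sum, Finset.mul_sum]
  refine Finset.sum_le_sum fun S _ => (hle z (x S)).trans_eq ?_
  simp [WithLp.ofLp_sum, Finset.sum_apply]

lemma sum_adjoint_smul_add_ne_zero [FiniteDimensional ℂ F] [CompleteSpace F]
    {A B : Fin m → F →L[ℂ] F} {z : Fin m → ℂ}
    (h : ∀ x : F, x ≠ 0 → ∑ i, (A i (z i • x) + B i (conj (z i) • x)) ≠ 0) {x : F} (hx : x ≠ 0) :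
    ∑ i, (adjoint (B i) (z i • x) + adjoint (A i) (conj (z i) • x)) ≠ 0 := by
  set c : F →L[ℂ] F := ∑ i, (z i • A i + conj (z i) • B i) with hc
  have hinj : Function.Injective (c : F →ₗ[ℂ] F) := by
    refine (injective_iff_map_eq_zero _).2 fun y hy => by_contra fun hne => h y hne ?_
    simpa [hc, sum_apply] using hy
  obtain ⟨y, rfl⟩ := LinearMap.surjective_of_injective hinj x
  rw [ContinuousLinearMap.coe_coe] at hx ⊢
  have hadj : adjoint c = ∑ i, (z i • adjoint (B i) + conj (z i) • adjoint (A i)) := by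
    simp only [hc, map_sum, map_add, map_smulₛₗ, Complex.conj_conj]
    exact Finset.sum_congr rfl fun i _ => add_comm _ _
  have hsum : ∑ i, (adjoint (B i) (z i • c y) + adjoint (A i) (conj (z i) • c y)) =
      adjoint c (c y) := by
    simp only [hadj, sum_apply, add_apply, smul_apply, map_smul]
  intro hzero
  refine hx (inner_self_eq_zero (𝕜 := ℂ).1 ?_)
  rw [← c.adjoint_inner_left, ← hsum, hzero, inner_zero_left]

end Ellipticity

section Commutator

variable {m : ℕ} {E : Type*} [NormedAddCommGroup E] [InnerProductSpace ℂ E]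

lemma pointwise_comp_mul_pointwise_comp {ι : Type*} {a b : E →L[ℂ] E}
    {X Y : lp (fun _ : ι => E) 2 →L[ℂ] lp (fun _ : ι => E) 2}
    (h : X ∘L pointwise ι b = pointwise ι b ∘L X) :
    (pointwise ι a ∘L X) ∘L (pointwise ι b ∘L Y) = pointwise ι (a * b) ∘L (X ∘L Y) := by
  have hab : pointwise ι (a * b) = pointwise ι a ∘L pointwise ι b := rfl
  rw [hab, ContinuousLinearMap.comp_assoc, ← ContinuousLinearMap.comp_assoc X, h]
  rfl

variable [CompleteSpace E] [NeZero m]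

theorem isCompactOperator_toeplitz_commutator [FiniteDimensional ℂ E] {A B P Q : Fin m → E →L[ℂ] E}
    (hAP : ∀ i j, Commute (A i) (P j)) (hAQ : ∀ i j, Commute (A i) (Q j))
    (hBP : ∀ i j, Commute (B i) (P j)) (hBQ : ∀ i j, Commute (B i) (Q j)) :
    IsCompactOperator (toeplitz A B ∘L toeplitz P Q - toeplitz P Q ∘L toeplitz A B) := by
  have hexpand : toeplitz A B ∘L toeplitz P Q - toeplitz P Q ∘L toeplitz A B =
      ∑ i, ∑ j, (pointwise _ (B i * P j) ∘L
          (coshift E i ∘L shift E j - shift E j ∘L coshift E i) -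
        pointwise _ (A i * Q j) ∘L (coshift E j ∘L shift E i - shift E i ∘L coshift E j)) := by
    simp only [toeplitz, ContinuousLinearMap.finsetSum_comp, ContinuousLinearMap.comp_finsetSum]
    rw [Finset.sum_comm (f := fun j i => (_ ∘L _ : Hardy m E →L[ℂ] Hardy m E))]
    simp only [← Finset.sum_sub_distrib]
    refine Finset.sum_congr rfl fun i _ => Finset.sum_congr rfl fun j _ => ?_
    simp only [ContinuousLinearMap.comp_add, ContinuousLinearMap.add_comp,
      ContinuousLinearMap.comp_sub,
      pointwise_comp_mul_pointwise_comp (shift_comp_pointwise _ _),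
      pointwise_comp_mul_pointwise_comp (coshift_comp_pointwise _ _), (hAP i j).eq, (hAQ i j).eq,
      (hBP i j).eq, (hBQ i j).eq, shift_comm i j, coshift_comm i j]
    abel
  rw [hexpand]
  refine isCompactOperator_sum _ fun i _ => isCompactOperator_sum _ fun j _ => ?_
  have hBP := (isCompactOperator_coshift_comp_shift_sub j i).clm_comp (pointwise _ (B i * P j))
  have hAQ := (isCompactOperator_coshift_comp_shift_sub i j).clm_comp (pointwise _ (A i * Q j))
  exact hBP.sub hAQ

end Commutator

/-! ### The Koszul operator -/

/-- The Laplacian of the Koszul complex, with `c`, `a` the ladder operators of the exterior algebra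
and `Z`, `W` those of the Hardy space. The weight `1 - D` corrects the failure of `Z` and `W` to
satisfy the commutation relations of the Fock space. -/
lemma sum_mul_mul_sum_mul_add {R ι : Type*} [Ring R] [Fintype ι] [DecidableEq ι]
    {c a W Z : ι → R} {D : R} (hWa : ∀ i j, Commute (W i) (a j)) (hZc : ∀ i j, Commute (Z i) (c j))
    (hDa : ∀ i, Commute D (a i)) (hDc : ∀ i, Commute D (c i))
    (hca : ∀ i j, c i * a j + a j * c i = if i = j then 1 else 0)
    (hZW : ∀ i j, Z j * W i - D * (Z j * W i) = W i * Z j - if i = j then D else 0)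
    (hWZ : ∑ i, W i * Z i = 1) :
    (∑ i, c i * W i) * (∑ j, a j * Z j) + (1 - D) * ((∑ j, a j * Z j) * ∑ i, c i * W i) =
      1 - (∑ i, a i * c i) * D := by
  have hterm (i j : ι) : c i * W i * (a j * Z j) + (1 - D) * (a j * Z j * (c i * W i)) =
      if i = j then W i * Z j - a j * c i * D else 0 :=
    calc c i * W i * (a j * Z j) + (1 - D) * (a j * Z j * (c i * W i))
        = c i * a j * (W i * Z j) + a j * c i * (Z j * W i - D * (Z j * W i)) := by
          have hD : Commute D (a j * c i) := (hDa j).mul_right (hDc i)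
          rw [(hWa i j).mul_mul_mul_comm, (hZc j i).mul_mul_mul_comm, sub_mul, one_mul, mul_sub,
            ← mul_assoc D, hD.eq, mul_assoc (a j * c i)]
      _ = (c i * a j + a j * c i) * (W i * Z j) - a j * c i * if i = j then D else 0 := by
          rw [hZW, mul_sub, add_mul, add_sub_assoc]
      _ = if i = j then W i * Z j - a j * c i * D else 0 := by
          rw [hca]
          split_ifs <;> simp
  rw [Finset.sum_mul_sum, Finset.sum_comm, Finset.sum_mul_sum, Finset.mul_sum,
    ← Finset.sum_add_distrib]
  simp only [Finset.mul_sum, ← Finset.sum_add_distrib, hterm, Finset.sum_ite_eq', Finset.mem_univ,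
    if_true, Finset.sum_sub_distrib, hWZ, Finset.sum_mul]

section Koszul

variable {m : ℕ}

section Relations

variable {F : Type*} [NormedAddCommGroup F] [InnerProductSpace ℂ F]

lemma pointwise_creation_mul_pointwise_annihilation_add (i j : Fin m) :
    pointwise (Fin m → ℕ) (creation F i) * pointwise _ (annihilation F j) +
      pointwise _ (annihilation F j) * pointwise _ (creation F i) = if i = j then 1 else 0 := by
  ext u α : 3
  have h := DFunLike.congr_fun (creation_mul_annihilation_add (F := F) i j) (u α)
  split_ifs at h ⊢ <;> exact h

lemma sum_annihilation_creation_apply (x : Exterior m F) (S : Finset (Fin m)) :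
    ∑ i, annihilation F i (creation F i x) S = ((m : ℂ) - S.card) • x S := by
  have hcard : ((Finset.univ.filter (· ∉ S)).card : ℂ) = m - S.card := by
    rw [← Finset.compl_filter, Finset.filter_univ_mem, Finset.card_compl, Fintype.card_fin,
      Nat.cast_sub (card_finset_fin_le S)]
  simp only [annihilation_creation_apply, ← ite_not (_ ∈ S), ← Finset.sum_filter, Finset.sum_const,
    ← Nat.cast_smul_eq_nsmul ℂ, hcard]

variable {E : Type*} [NormedAddCommGroup E] [InnerProductSpace ℂ E] [NeZero m]

lemma degreeInvOp_comp_pointwise (a : E →L[ℂ] E) :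
    degreeInvOp (m := m) E ∘L pointwise _ a = pointwise _ a ∘L degreeInvOp E := by
  ext u α
  exact (map_smul a _ _).symm

lemma shift_comp_coshift_sub_degreeInvOp_comp [CompleteSpace E] (i j : Fin m) :
    shift E j ∘L coshift E i - degreeInvOp E ∘L shift E j ∘L coshift E i =
      coshift E i ∘L shift E j - if i = j then degreeInvOp E else 0 := by
  rcases eq_or_ne i j with rfl | hij
  · rw [if_pos rfl,
      sub_eq_iff_eq_add.1 (coshift_comp_shift_sub_shift_comp_coshift_self (E := E) i)]
    abel
  · rw [if_neg hij,
      sub_eq_iff_eq_add.1 (coshift_comp_shift_sub_shift_comp_coshift_of_ne (E := E) hij.symm)]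
    abel

end Relations

variable (m) [NeZero m] (F : Type*) [NormedAddCommGroup F] [InnerProductSpace ℂ F]
  [CompleteSpace F]

/-- The Koszul differential of the coordinate multiplications of the Hardy space. -/
noncomputable def koszulDifferential : Hardy m (Exterior m F) →L[ℂ] Hardy m (Exterior m F) :=
  ∑ i, pointwise _ (annihilation F i) ∘L shift (Exterior m F) i

/-- The Koszul operator `Q + Q†` of the Koszul differential `Q`. -/
noncomputable def koszul : Hardy m (Exterior m F) →L[ℂ] Hardy m (Exterior m F) :=
  toeplitz (annihilation F) (creation F)

variable {m F}

lemma adjoint_koszul : adjoint (koszul m F) = koszul m F := by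
  simp only [koszul, adjoint_toeplitz, adjoint_creation, adjoint_annihilation]

lemma adjoint_koszulDifferential :
    adjoint (koszulDifferential m F) =
      ∑ i, pointwise _ (creation F i) ∘L coshift (Exterior m F) i := by
  simp only [koszulDifferential, map_sum, ContinuousLinearMap.adjoint_comp, adjoint_shift,
    adjoint_pointwise, adjoint_annihilation, coshift_comp_pointwise]

lemma koszul_eq_add_adjoint :
    koszul m F = koszulDifferential m F + adjoint (koszulDifferential m F) := by
  rw [adjoint_koszulDifferential, koszulDifferential, koszul, toeplitz, Finset.sum_add_distrib]

lemma koszulDifferential_comp_self :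
    koszulDifferential m F ∘L koszulDifferential m F = 0 := by
  have hanti (i j : Fin m) :
      (pointwise _ (annihilation F i) ∘L shift (Exterior m F) i) *
          (pointwise _ (annihilation F j) ∘L shift (Exterior m F) j) +
        (pointwise _ (annihilation F j) ∘L shift (Exterior m F) j) *
          (pointwise _ (annihilation F i) ∘L shift (Exterior m F) i) = 0 := by
    rw [ContinuousLinearMap.mul_def, ContinuousLinearMap.mul_def,
      pointwise_comp_mul_pointwise_comp (shift_comp_pointwise _ _),
      pointwise_comp_mul_pointwise_comp (shift_comp_pointwise _ _), shift_comm j i]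
    ext u α : 3
    exact DFunLike.congr_fun (annihilation_mul_annihilation_add (F := F) i j) _
  have hsum := sum_mul_sum_add_sum_mul_sum
    (fun i => pointwise _ (annihilation F i) ∘L shift (Exterior m F) i)
    fun i => pointwise _ (annihilation F i) ∘L shift (Exterior m F) i
  simp only [hanti, Finset.sum_const_zero] at hsum
  ext u : 1
  have htwo : (2 : ℂ) • koszulDifferential m F (koszulDifferential m F u) = 0 := by
    rw [two_smul]
    exact DFunLike.congr_fun hsum u
  exact (smul_eq_zero.1 htwo).resolve_left two_ne_zero

lemma koszulDifferential_eq_zero_of_koszul_eq_zero {u : Hardy m (Exterior m F)}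
    (hu : koszul m F u = 0) :
    koszulDifferential m F u = 0 ∧ adjoint (koszulDifferential m F) u = 0 := by
  set Q := koszulDifferential m F with hQ
  have hadd : Q u + adjoint Q u = 0 := by
    rwa [koszul_eq_add_adjoint] at hu
  have horth : ⟪Q u, adjoint Q u⟫_ℂ = 0 := by
    rw [ContinuousLinearMap.adjoint_inner_right, ← ContinuousLinearMap.comp_apply,
      koszulDifferential_comp_self, zero_apply, inner_zero_left]
  have hzero : ⟪Q u, Q u⟫_ℂ = 0 :=
    calc ⟪Q u, Q u⟫_ℂ = ⟪Q u, Q u + adjoint Q u⟫_ℂ := by rw [inner_add_right, horth, add_zero]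
      _ = 0 := by rw [hadd, inner_zero_right]
  have hQu : Q u = 0 := inner_self_eq_zero.1 hzero
  exact ⟨hQu, by rwa [hQu, zero_add] at hadd⟩

lemma adjoint_comp_koszulDifferential_add :
    adjoint (koszulDifferential m F) * koszulDifferential m F +
      (1 - degreeInvOp _) * (koszulDifferential m F * adjoint (koszulDifferential m F)) =
      1 - (∑ i, pointwise _ (annihilation F i) * pointwise _ (creation F i)) * degreeInvOp _ := by
  rw [adjoint_koszulDifferential]
  exact sum_mul_mul_sum_mul_add (fun i j => coshift_comp_pointwise _ _)
    (fun i j => shift_comp_pointwise _ _) (fun i => degreeInvOp_comp_pointwise _)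
    (fun i => degreeInvOp_comp_pointwise _) pointwise_creation_mul_pointwise_annihilation_add
    shift_comp_coshift_sub_degreeInvOp_comp sum_coshift_comp_shift

lemma eq_zero_of_koszul_eq_zero {u : Hardy m (Exterior m F)} (hu : koszul m F u = 0)
    {α : Fin m → ℕ} {S : Finset (Fin m)} (h : ¬(α = 0 ∧ S = ∅)) : u α S = 0 := by
  obtain ⟨hQ, hQ'⟩ := koszulDifferential_eq_zero_of_koszul_eq_zero hu
  have hu' : 0 = u - ∑ i, pointwise _ (annihilation F i)
      (pointwise _ (creation F i) (degreeInvOp (Exterior m F) u)) := by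
    simpa [hQ, hQ'] using DFunLike.congr_fun adjoint_comp_koszulDifferential_add u
  have hS : u α S = ((m : ℂ) - S.card) • (degreeInv α : ℂ) • u α S := by
    have hαS := congrArg (fun v : Hardy m (Exterior m F) => v α S)
      (sub_eq_zero.1 hu'.symm)
    simp only [lp.coeFn_sum, Finset.sum_apply, WithLp.ofLp_sum, pointwise_apply] at hαS
    rwa [sum_annihilation_creation_apply] at hαS
  have hpos : (degree α : ℂ) + S.card ≠ 0 := by
    norm_cast
    contrapose! h
    exact ⟨degree_eq_zero.1 (Nat.eq_zero_of_add_eq_zero_right h), Finset.card_eq_zero.1 (by lia)⟩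
  have hm : (degree α : ℂ) + m ≠ 0 := by
    norm_cast
    exact (Nat.add_pos_right _ (NeZero.pos m)).ne'
  have hcoeff : 1 - ((m : ℂ) - S.card) * degreeInv α = (degree α + S.card) / (degree α + m) := by
    rw [degreeInv]
    push_cast
    field_simp
    ring
  rw [smul_smul, ← sub_eq_zero, ← one_smul ℂ (u α S), smul_smul, mul_one, ← sub_smul, hcoeff] at hS
  exact (smul_eq_zero.1 hS).resolve_left (div_ne_zero hpos hm)

end Koszul

/-! ### Parity sectors and the vacuum -/

section Sector

variable {m : ℕ} {F : Type*} [NormedAddCommGroup F] [InnerProductSpace ℂ F]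

/-- The parities of the polynomial degree and of the exterior degree of the coefficient at
`(α, S)`. -/
def biparity (α : Fin m → ℕ) (S : Finset (Fin m)) : ZMod 2 × ZMod 2 := (degree α, S.card)

lemma biparity_raise (i : Fin m) (α : Fin m → ℕ) (S : Finset (Fin m)) :
    biparity (raise i α) S = biparity α S + (1, 0) := by
  simp [biparity]

lemma add_eq_iff_eq_add_of_zmodTwo {x y z : ZMod 2 × ZMod 2} : x + y = z ↔ x = z + y := by
  revert x y z
  decide

variable (m F) in
/-- The space of the vectors whose nonzero coefficients have biparity `g`. -/
noncomputable def sector (g : ZMod 2 × ZMod 2) : Submodule ℂ (Hardy m (Exterior m F)) :=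
  ⨅ (α) (S) (_ : biparity α S ≠ g), (PiLp.proj 2 (𝕜 := ℂ) (fun _ : Finset (Fin m) => F) S ∘L
    lp.evalCLM ℂ (fun _ : Fin m → ℕ => Exterior m F) 2 α).ker

lemma mem_sector {g : ZMod 2 × ZMod 2} {u : Hardy m (Exterior m F)} :
    u ∈ sector m F g ↔ ∀ α S, biparity α S ≠ g → u α S = 0 := by
  simp only [sector, Submodule.mem_iInf]
  rfl

lemma isClosed_sector (g : ZMod 2 × ZMod 2) :
    IsClosed (sector m F g : Set (Hardy m (Exterior m F))) := by
  simp only [sector, Submodule.coe_iInf]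
  exact isClosed_iInter fun α => isClosed_iInter fun S => isClosed_iInter fun _ =>
    ContinuousLinearMap.isClosed_ker _

instance [CompleteSpace F] (g : ZMod 2 × ZMod 2) : CompleteSpace (sector m F g) :=
  (isClosed_sector g).completeSpace_coe

/-- `a` changes the parity of the exterior degree by `ε`. -/
def AddsParity (ε : ZMod 2) (a : Exterior m F →L[ℂ] Exterior m F) : Prop :=
  ∀ x S, (∀ T : Finset (Fin m), (T.card : ZMod 2) + ε = S.card → x T = 0) → a x S = 0

lemma addsParity_mapCoeff (a : F →L[ℂ] F) : AddsParity 0 (mapCoeff (m := m) a) := fun x S h => by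
  rw [mapCoeff_apply, h S (add_zero _), map_zero]

lemma addsParity_weightedReindex {c : Finset (Fin m) → ℂ} {φ : Finset (Fin m) → Finset (Fin m)}
    {ε : ZMod 2} (h : ∀ S, c S ≠ 0 → ((φ S).card : ZMod 2) + ε = S.card) :
    AddsParity ε (weightedReindex F c φ) := fun x S hx => by
  rw [weightedReindex_apply]
  by_cases hc : c S = 0
  · rw [hc, zero_smul]
  · rw [hx _ (h S hc), smul_zero]

lemma natCast_card_symmDiff_singleton_add_one (S : Finset (Fin m)) (i : Fin m) :
    ((S ∆ {i}).card : ZMod 2) + 1 = S.card := by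
  rw [natCast_card_symmDiff_singleton, add_assoc, CharTwo.add_self_eq_zero, add_zero]

lemma addsParity_annihilation (i : Fin m) : AddsParity 1 (annihilation F i) :=
  addsParity_weightedReindex fun S _ => natCast_card_symmDiff_singleton_add_one S i

lemma addsParity_creation (i : Fin m) : AddsParity 1 (creation F i) :=
  addsParity_weightedReindex fun S _ => natCast_card_symmDiff_singleton_add_one S i

lemma AddsParity.mapsTo_pointwise_sector {ε : ZMod 2} {a : Exterior m F →L[ℂ] Exterior m F}
    (ha : AddsParity ε a) (g : ZMod 2 × ZMod 2) :
    MapsTo (pointwise _ a : Hardy m _ →L[ℂ] Hardy m _) (sector m F g)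
      (sector m F (g + (0, ε))) := by
  refine fun u hu => mem_sector.2 fun α S h => ha _ _ fun T hT => mem_sector.1 hu _ _ ?_
  rintro rfl
  exact h (by simp [biparity, hT])

variable [NeZero m]

lemma mapsTo_coshift_sector (i : Fin m) (g : ZMod 2 × ZMod 2) :
    MapsTo (coshift (Exterior m F) i) (sector m F g) (sector m F (g + (1, 0))) := by
  refine fun u hu => mem_sector.2 fun α S h => ?_
  rw [coshift_apply, PiLp.smul_apply, mem_sector.1 hu _ _ ?_, smul_zero]
  rwa [biparity_raise, Ne, add_eq_iff_eq_add_of_zmodTwo]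

lemma mapsTo_shift_sector [CompleteSpace F] (i : Fin m) (g : ZMod 2 × ZMod 2) :
    MapsTo (shift (Exterior m F) i) (sector m F g) (sector m F (g + (1, 0))) := by
  refine fun u hu => mem_sector.2 fun β S h => ?_
  by_cases hβ : β i = 0
  · rw [shift_apply_eq_zero hβ, PiLp.zero_apply]
  · obtain ⟨α, rfl⟩ := exists_eq_raise hβ
    rw [biparity_raise, Ne, add_left_inj] at h
    rw [shift_apply_raise, PiLp.smul_apply, mem_sector.1 hu _ _ h, smul_zero]

lemma mapsTo_toeplitz_sector [CompleteSpace F] {A B : Fin m → Exterior m F →L[ℂ] Exterior m F}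
    {ε : ZMod 2} (hA : ∀ i, AddsParity ε (A i)) (hB : ∀ i, AddsParity ε (B i))
    {g g' : ZMod 2 × ZMod 2} (hg : g + (1, ε) = g') :
    MapsTo (toeplitz A B) (sector m F g) (sector m F g') := by
  have hg' : g + (1, 0) + (0, ε) = g' := by simp [← hg, add_assoc]
  intro u hu
  simp only [toeplitz, sum_apply, add_apply]
  refine Submodule.sum_mem _ fun i _ => Submodule.add_mem _ ?_ ?_
  · exact hg' ▸ (hA i).mapsTo_pointwise_sector _ (mapsTo_shift_sector i g hu)
  · exact hg' ▸ (hB i).mapsTo_pointwise_sector _ (mapsTo_coshift_sector i g hu)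

end Sector

section Vacuum

variable (m : ℕ) (F : Type*) [NormedAddCommGroup F] [InnerProductSpace ℂ F]

/-- The embedding of `F` as the coefficients at `(0, ∅)`. -/
noncomputable def vacuum : F →ₗ[ℂ] Hardy m (Exterior m F) :=
  lp.lsingle 2 0 ∘ₗ (WithLp.linearEquiv 2 ℂ (Finset (Fin m) → F)).symm.toLinearMap ∘ₗ
    LinearMap.single ℂ (fun _ : Finset (Fin m) => F) ∅

variable {m F}

lemma vacuum_apply (x : F) (α : Fin m → ℕ) (S : Finset (Fin m)) :
    vacuum m F x α S = if α = 0 ∧ S = ∅ then x else 0 := by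
  change (lp.single 2 0 (WithLp.toLp 2 (Pi.single ∅ x)) : Hardy m (Exterior m F)) α S = _
  rw [lp.single_apply]
  by_cases hα : α = 0
  · subst hα
    simp
  · simp [hα]

lemma vacuum_injective : Function.Injective (vacuum m F) := fun x y h => by
  simpa [vacuum_apply] using congrArg (fun u : Hardy m (Exterior m F) => u 0 ∅) h

variable [CompleteSpace F] [NeZero m]

lemma koszul_vacuum (x : F) : koszul m F (vacuum m F x) = 0 := by
  let x₀ : Exterior m F := WithLp.toLp 2 (Pi.single ∅ x)
  have hvac : vacuum m F x = lp.single 2 0 x₀ := rfl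
  have hannihilation (i : Fin m) : annihilation F i x₀ = 0 := by
    ext S
    by_cases hi : i ∈ S
    · simp [annihilation_apply, hi]
    · have hne : S ≠ {i} := fun h => hi (h ▸ Finset.mem_singleton_self i)
      simp [annihilation_apply, x₀, hne]
  rw [hvac, koszul, toeplitz, sum_apply]
  refine Finset.sum_eq_zero fun i _ => ?_
  rw [← shift_comp_pointwise, add_apply, ContinuousLinearMap.comp_apply,
    ContinuousLinearMap.comp_apply, pointwise_single, hannihilation, lp.single_zero, map_zero,
    coshift_single_eq_zero rfl, map_zero, add_zero]

lemma ker_koszul : (koszul m F).ker = LinearMap.range (vacuum m F) := by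
  apply le_antisymm
  · intro u hu
    refine ⟨u 0 ∅, ?_⟩
    ext α S
    rw [vacuum_apply]
    split_ifs with h
    · rw [h.1, h.2]
    · exact (eq_zero_of_koszul_eq_zero hu h).symm
  · rintro _ ⟨x, rfl⟩
    exact koszul_vacuum x

lemma nullityOn_sector_zero_koszul :
    nullityOn (sector m F 0) (koszul m F) = Module.finrank ℂ F := by
  have hle : LinearMap.range (vacuum m F) ≤ sector m F 0 := by
    rintro _ ⟨x, rfl⟩
    refine mem_sector.2 fun α S h => ?_
    rw [vacuum_apply, if_neg]
    rintro ⟨rfl, rfl⟩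
    exact h (by simp [biparity, degree_eq_zero.2 rfl])
  rw [nullityOn, ker_koszul, inf_eq_right.2 hle, LinearMap.finrank_range_of_inj vacuum_injective]

lemma nullityOn_sector_koszul_of_ne_zero {g : ZMod 2 × ZMod 2}
    (hg : g ≠ 0) : nullityOn (sector m F g) (koszul m F) = 0 := by
  have hbot : sector m F g ⊓ (koszul m F).ker = ⊥ := by
    refine (Submodule.eq_bot_iff _).2 fun u hu => ?_
    ext α S
    by_cases h : α = 0 ∧ S = ∅
    · refine mem_sector.1 hu.1 α S fun h' => hg ?_
      rw [← h', h.1, h.2]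
      simp [biparity, degree_eq_zero.2 rfl]
    · exact eq_zero_of_koszul_eq_zero hu.2 h
  rw [nullityOn, hbot, finrank_bot]

end Vacuum

/-! ### Divisibility by a power of two -/

section MatrixUnits

/-- A space with a system of matrix units indexed by `ι` is the direct sum of copies of the range
of any of the diagonal units. -/
theorem card_dvd_finrank_of_matrixUnits {K V ι : Type*} [Field K] [AddCommGroup V] [Module K V]
    [Fintype ι] [DecidableEq ι] {e : ι → ι → Module.End K V}
    (hmul : ∀ i j k l, e i j * e k l = if j = k then e i l else 0) (hone : ∑ i, e i i = 1) :
    Fintype.card ι ∣ Module.finrank K V := by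
  by_cases hfin : Module.Finite K V
  swap
  · rw [Module.finrank_of_not_finite hfin]
    exact dvd_zero _
  rcases isEmpty_or_nonempty ι with hι | ⟨⟨o⟩⟩
  · have : Subsingleton V := subsingleton_of_forall_eq 0 fun v => by
      simpa using (DFunLike.congr_fun hone v).symm
    rw [Module.finrank_zero_of_subsingleton]
    exact dvd_zero _
  have happly (i j k l : ι) (v : V) : e i j (e k l v) = if j = k then e i l v else 0 := by
    rw [← Module.End.mul_apply, hmul]
    split_ifs <;> rfl
  let copies : V ≃ₗ[K] (ι → LinearMap.range (e o o)) :=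
    { toFun := fun v i => ⟨e o i v, e o i v, by rw [happly, if_pos rfl]⟩
      map_add' := fun v w => by ext i; simp
      map_smul' := fun c v => by ext i; simp
      invFun := fun w => ∑ i, e i o (w i)
      left_inv := fun v => by
        simpa [happly] using DFunLike.congr_fun hone v
      right_inv := fun w => by
        ext i
        obtain ⟨v, hv⟩ := (w i).2
        simp [map_sum, happly, ← hv] }
  rw [copies.finrank_eq, Module.finrank_pi_fintype, Finset.sum_const, smul_eq_mul]
  exact dvd_mul_right _ _

variable {m : ℕ} {F : Type*} [NormedAddCommGroup F] [InnerProductSpace ℂ F]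

variable (F) in
/-- The operator that moves the coefficient at `T` to the place `S`. -/
noncomputable def matrixUnit (S T : Finset (Fin m)) : Exterior m F →L[ℂ] Exterior m F :=
  weightedReindex F (fun R => if R = S then 1 else 0) fun _ => T

lemma matrixUnit_apply (S T : Finset (Fin m)) (x : Exterior m F) (R : Finset (Fin m)) :
    matrixUnit F S T x R = if R = S then x T else 0 := by
  simp [matrixUnit]

lemma matrixUnit_mul_matrixUnit (S T S' T' : Finset (Fin m)) (x : Exterior m F) :
    matrixUnit F S T (matrixUnit F S' T' x) = if T = S' then matrixUnit F S T' x else 0 := by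
  ext R
  split_ifs with h <;> simp [matrixUnit_apply, h]

lemma addsParity_matrixUnit {S T : Finset (Fin m)} (h : (S.card : ZMod 2) = T.card) :
    AddsParity 0 (matrixUnit F S T) :=
  addsParity_weightedReindex fun R hR => by
    rw [add_zero, ← h, of_not_not fun hne => hR (if_neg hne)]

lemma card_finset_card_eq_add_one [NeZero m] (s : ZMod 2) :
    Fintype.card {S : Finset (Fin m) // (S.card : ZMod 2) = s} =
      Fintype.card {S : Finset (Fin m) // (S.card : ZMod 2) = s + 1} :=
  Fintype.card_congr <| ((symmDiff_left_involutive {(0 : Fin m)}).toPerm).subtypeEquiv fun S => by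
    simp [natCast_card_symmDiff_singleton]

lemma card_finset_card_eq [NeZero m] (s : ZMod 2) :
    Fintype.card {S : Finset (Fin m) // (S.card : ZMod 2) = s} = 2 ^ (m - 1) := by
  have hne (t : ZMod 2) : ¬t = s ↔ t = s + 1 := by
    revert t s
    decide
  have hcompl := Fintype.card_subtype_compl fun S : Finset (Fin m) => (S.card : ZMod 2) = s
  have hle := Fintype.card_subtype_le fun S : Finset (Fin m) => (S.card : ZMod 2) = s
  have hpow : 2 ^ m = 2 * 2 ^ (m - 1) := (mul_pow_sub_one (NeZero.ne m) 2).symm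
  simp only [hne, Fintype.card_finset, Fintype.card_fin, ← card_finset_card_eq_add_one]
    at hcompl hle
  lia

theorem two_pow_dvd_nullityOn_sector [NeZero m] (g : ZMod 2 × ZMod 2)
    {T : Hardy m (Exterior m F) →L[ℂ] Hardy m (Exterior m F)}
    (hT : ∀ S S', Commute T (pointwise _ (matrixUnit F S S'))) :
    2 ^ (m - 1) ∣ nullityOn (sector m F g) T := by
  have hmaps (S S' : {S : Finset (Fin m) // (S.card : ZMod 2) = g.2}) :
      MapsTo (pointwise _ (matrixUnit F S.1 S'.1) : Hardy m _ →L[ℂ] Hardy m _)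
        (sector m F g ⊓ T.ker : Submodule ℂ (Hardy m (Exterior m F)))
        (sector m F g ⊓ T.ker : Submodule ℂ (Hardy m (Exterior m F))) := by
    refine fun u hu => ⟨?_, ?_⟩
    · have := (addsParity_matrixUnit (F := F) (S.2.trans S'.2.symm)).mapsTo_pointwise_sector g hu.1
      rwa [Prod.mk_zero_zero, add_zero] at this
    · have hu0 : T u = 0 := hu.2
      have hcomm := DFunLike.congr_fun (hT S S').eq u
      rw [mul_apply_eq_comp, mul_apply_eq_comp, hu0, map_zero] at hcomm
      exact hcomm
  rw [nullityOn, ← card_finset_card_eq g.2]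
  refine card_dvd_finrank_of_matrixUnits (e := fun S S' =>
    (pointwise (Fin m → ℕ) (matrixUnit F S.1 S'.1)).toLinearMap.restrict (hmaps S S')) ?_ ?_
  · intro S S' R R'
    ext u α Q
    have h := congrArg (· Q) (matrixUnit_mul_matrixUnit S.1 S'.1 R.1 R'.1 (u.1 α))
    simp only [← Subtype.ext_iff] at h
    split_ifs at h ⊢ <;> exact h
  · ext u α S
    have h : ∑ R : {S : Finset (Fin m) // (S.card : ZMod 2) = g.2},
        matrixUnit F R.1 R.1 (u.1 α) S = u.1 α S := by
      simp only [matrixUnit_apply]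
      by_cases hS : (S.card : ZMod 2) = g.2
      · rw [Finset.sum_eq_single ⟨S, hS⟩ (fun R _ hR => if_neg fun h => hR (Subtype.ext h.symm))
          (fun h => absurd (Finset.mem_univ _) h), if_pos rfl]
      · rw [mem_sector.1 u.2.1 α S fun h => hS (h ▸ rfl)]
        refine Finset.sum_eq_zero fun R _ => if_neg ?_
        rintro rfl
        exact hS R.2
    rw [LinearMap.sum_apply, Submodule.coe_sum, lp.coeFn_sum, Finset.sum_apply, WithLp.ofLp_sum,
      Finset.sum_apply]
    exact h

end MatrixUnits

section Main

lemma commute_toeplitz_pointwise {m : ℕ} [NeZero m] {E : Type*} [NormedAddCommGroup E]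
    [InnerProductSpace ℂ E] [CompleteSpace E] {A B : Fin m → E →L[ℂ] E} {a : E →L[ℂ] E}
    (hA : ∀ i, Commute (A i) a) (hB : ∀ i, Commute (B i) a) :
    Commute (toeplitz A B) (pointwise _ a) := by
  have hpointwise {b : E →L[ℂ] E} (h : Commute b a) :
      Commute (pointwise (Fin m → ℕ) b) (pointwise _ a) := by
    ext u α
    exact DFunLike.congr_fun h.eq (u α)
  refine Commute.sum_left _ _ _ fun i _ => .add_left ?_ ?_
  · exact (hpointwise (hA i)).mul_left (shift_comp_pointwise a i)
  · exact (hpointwise (hB i)).mul_left (coshift_comp_pointwise a i)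

variable {m : ℕ} [NeZero m] {F : Type*} [NormedAddCommGroup F] [InnerProductSpace ℂ F]

section TensorToeplitz

variable [CompleteSpace F]

/-- The Toeplitz operator with symbol `z ↦ ∑ i, (z i • A i + conj (z i) • B i)` on the Hardy space,
tensored with the identity of the exterior algebra. -/
noncomputable def exteriorToeplitz (A B : Fin m → F →L[ℂ] F) :
    Hardy m (Exterior m F) →L[ℂ] Hardy m (Exterior m F) :=
  toeplitz (fun i => mapCoeff (A i)) fun i => mapCoeff (B i)

lemma adjoint_exteriorToeplitz (A B : Fin m → F →L[ℂ] F) :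
    adjoint (exteriorToeplitz A B) =
      exteriorToeplitz (fun i => adjoint (B i)) fun i => adjoint (A i) := by
  simp only [exteriorToeplitz, adjoint_toeplitz, adjoint_mapCoeff]

lemma two_pow_dvd_nullityOn_exteriorToeplitz (A B : Fin m → F →L[ℂ] F) (g : ZMod 2 × ZMod 2) :
    2 ^ (m - 1) ∣ nullityOn (sector m F g) (exteriorToeplitz A B) :=
  two_pow_dvd_nullityOn_sector g fun _ _ =>
    commute_toeplitz_pointwise (fun _ => mapCoeff_mul_weightedReindex _ _ _)
      fun _ => mapCoeff_mul_weightedReindex _ _ _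

lemma mapsTo_exteriorToeplitz_sector (A B : Fin m → F →L[ℂ] F) {g g' : ZMod 2 × ZMod 2}
    (hg : g + (1, 0) = g') : MapsTo (exteriorToeplitz A B) (sector m F g) (sector m F g') :=
  mapsTo_toeplitz_sector (fun _ => addsParity_mapCoeff _) (fun _ => addsParity_mapCoeff _) hg

lemma mapsTo_koszul_sector {g g' : ZMod 2 × ZMod 2} (hg : g + (1, 1) = g') :
    MapsTo (koszul m F) (sector m F g) (sector m F g') :=
  mapsTo_toeplitz_sector addsParity_annihilation addsParity_creation hg

end TensorToeplitz

variable [FiniteDimensional ℂ F] [CompleteSpace F]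

lemma essentiallyBoundedBelow_koszul : EssentiallyBoundedBelow (koszul m F) :=
  symbolBoundedBelow_annihilation_creation.essentiallyBoundedBelow_toeplitz

lemma essentiallyBoundedBelow_exteriorToeplitz {A B : Fin m → F →L[ℂ] F}
    (h : ∀ (z : Fin m → ℂ) (x : F), z ≠ 0 → x ≠ 0 →
      ∑ i, (A i (z i • x) + B i (conj (z i) • x)) ≠ 0) :
    EssentiallyBoundedBelow (exteriorToeplitz A B) :=
  (symbolBoundedBelow_of_ne_zero h).mapCoeff.essentiallyBoundedBelow_toeplitz

lemma isCompactOperator_commutator_exteriorToeplitz_koszul (A B : Fin m → F →L[ℂ] F) :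
    IsCompactOperator
      (exteriorToeplitz A B ∘L koszul m F - koszul m F ∘L exteriorToeplitz A B) :=
  isCompactOperator_toeplitz_commutator (fun _ _ => mapCoeff_mul_weightedReindex _ _ _)
    (fun _ _ => mapCoeff_mul_weightedReindex _ _ _)
    (fun _ _ => mapCoeff_mul_weightedReindex _ _ _)
    fun _ _ => mapCoeff_mul_weightedReindex _ _ _

theorem finrank_eq_nullityOn_exteriorToeplitz {A B : Fin m → F →L[ℂ] F}
    (h : EssentiallyBoundedBelow (exteriorToeplitz A B))
    (h' : EssentiallyBoundedBelow (adjoint (exteriorToeplitz A B))) :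
    (Module.finrank ℂ F : ℤ) =
      (nullityOn (sector m F (0, 0)) (exteriorToeplitz A B) -
        nullityOn (sector m F (1, 0)) (adjoint (exteriorToeplitz A B))) -
      (nullityOn (sector m F (1, 1)) (exteriorToeplitz A B) -
        nullityOn (sector m F (0, 1)) (adjoint (exteriorToeplitz A B))) := by
  have hadj {g g' : ZMod 2 × ZMod 2} (hg : g + (1, 0) = g') :
      MapsTo (adjoint (exteriorToeplitz A B)) (sector m F g) (sector m F g') := by
    rw [adjoint_exteriorToeplitz]
    exact mapsTo_exteriorToeplitz_sector _ _ hg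
  have hadj_koszul {g g' : ZMod 2 × ZMod 2} (hg : g + (1, 1) = g') :
      MapsTo (adjoint (koszul m F)) (sector m F g) (sector m F g') := by
    rw [adjoint_koszul]
    exact mapsTo_koszul_sector hg
  have hkoszul' : EssentiallyBoundedBelow (adjoint (koszul m F)) := by
    rw [adjoint_koszul]
    exact essentiallyBoundedBelow_koszul
  have hindex := nullityOn_add_eq_of_commute_mod_compact
    (U₁ := sector m F (0, 0)) (U₂ := sector m F (1, 1)) (U₃ := sector m F (0, 1))
    (U₄ := sector m F (1, 0))
    (mapsTo_exteriorToeplitz_sector A B (by decide)) (hadj (by decide))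
    (mapsTo_exteriorToeplitz_sector A B (by decide)) (hadj (by decide))
    (mapsTo_koszul_sector (by decide)) (hadj_koszul (by decide))
    (mapsTo_koszul_sector (by decide)) (hadj_koszul (by decide))
    h h' essentiallyBoundedBelow_koszul hkoszul'
    (isCompactOperator_commutator_exteriorToeplitz_koszul A B)
  have hvacuum : nullityOn (sector m F (0, 0)) (koszul m F) = Module.finrank ℂ F :=
    nullityOn_sector_zero_koszul
  rw [adjoint_koszul, hvacuum, nullityOn_sector_koszul_of_ne_zero (by decide),
    nullityOn_sector_koszul_of_ne_zero (by decide),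
    nullityOn_sector_koszul_of_ne_zero (by decide)] at hindex
  push_cast at hindex
  linarith

end Main

theorem two_pow_dvd_finrank_of_symbol_ne_zero {m : ℕ} [NeZero m] {F : Type*}
    [NormedAddCommGroup F] [InnerProductSpace ℂ F] [FiniteDimensional ℂ F]
    {A B : Fin m → F →L[ℂ] F}
    (h : ∀ (z : Fin m → ℂ) (x : F), z ≠ 0 → x ≠ 0 →
      ∑ i, (A i (z i • x) + B i (conj (z i) • x)) ≠ 0) :
    2 ^ (m - 1) ∣ Module.finrank ℂ F := by
  have := FiniteDimensional.complete ℂ F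
  have hadj : EssentiallyBoundedBelow (adjoint (exteriorToeplitz A B)) := by
    rw [adjoint_exteriorToeplitz]
    exact essentiallyBoundedBelow_exteriorToeplitz fun z x hz hx =>
      sum_adjoint_smul_add_ne_zero (fun y hy => h z y hz hy) hx
  have hdvd (g : ZMod 2 × ZMod 2) :
      ((2 ^ (m - 1) : ℕ) : ℤ) ∣ nullityOn (sector m F g) (exteriorToeplitz A B) :=
    Int.natCast_dvd_natCast.2 (two_pow_dvd_nullityOn_exteriorToeplitz A B g)
  have hdvd_adj (g : ZMod 2 × ZMod 2) :
      ((2 ^ (m - 1) : ℕ) : ℤ) ∣ nullityOn (sector m F g) (adjoint (exteriorToeplitz A B)) := by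
    rw [adjoint_exteriorToeplitz]
    exact Int.natCast_dvd_natCast.2 (two_pow_dvd_nullityOn_exteriorToeplitz _ _ g)
  rw [← Int.natCast_dvd_natCast,
    finrank_eq_nullityOn_exteriorToeplitz (essentiallyBoundedBelow_exteriorToeplitz h) hadj]
  exact ((hdvd _).sub (hdvd_adj _)).sub ((hdvd _).sub (hdvd_adj _))

/-! ### Real division algebras -/

section DivisionAlgebras

lemma wirtinger_smul_add {F : Type*} [AddCommGroup F] [Module ℂ F] (w : ℂ) (u v : F) :
    (w * 2⁻¹) • (u - Complex.I • v) + (conj w * 2⁻¹) • (u + Complex.I • v) =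
      (w.re : ℂ) • u + (w.im : ℂ) • v := by
  have hre : (w + conj w) / 2 = w.re := by
    rw [Complex.add_conj]
    push_cast
    ring
  have him : (conj w - w) * Complex.I / 2 = w.im := by
    rw [← neg_sub, Complex.sub_conj]
    push_cast
    linear_combination (-w.im : ℂ) * Complex.I_sq
  rw [← hre, ← him]
  module

theorem two_pow_dvd_finrank_of_realLinear {m : ℕ} [NeZero m] {F : Type*} [NormedAddCommGroup F]
    [InnerProductSpace ℂ F] [FiniteDimensional ℂ F] (ρ : (Fin m → ℂ) →ₗ[ℝ] F →L[ℂ] F)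
    (hρ : ∀ z x, z ≠ 0 → x ≠ 0 → ρ z x ≠ 0) :
    2 ^ (m - 1) ∣ Module.finrank ℂ F := by
  let a (i : Fin m) : F →L[ℂ] F := ρ (Pi.single i 1)
  let b (i : Fin m) : F →L[ℂ] F := ρ (Pi.single i Complex.I)
  have hρ_eq (z : Fin m → ℂ) : ρ z = ∑ i, ((z i).re • a i + (z i).im • b i) := by
    conv_lhs => rw [← Finset.univ_sum_single z, map_sum]
    refine Finset.sum_congr rfl fun i _ => ?_
    rw [← map_smul, ← map_smul, ← map_add, ← Pi.single_smul, ← Pi.single_smul, ← Pi.single_add]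
    simp [Complex.re_add_im]
  refine two_pow_dvd_finrank_of_symbol_ne_zero
    (A := fun i => (2⁻¹ : ℂ) • (a i - Complex.I • b i))
    (B := fun i => (2⁻¹ : ℂ) • (a i + Complex.I • b i)) fun z x hz hx => ?_
  convert hρ z x hz hx
  rw [hρ_eq, sum_apply]
  refine Finset.sum_congr rfl fun i _ => ?_
  simp only [add_apply, smul_apply, sub_apply, map_smul, smul_smul]
  exact wirtinger_smul_add (z i) (a i x) (b i x)

open Matrix in
theorem two_pow_dvd_card_of_det_ne_zero {m : ℕ} [NeZero m] {ι : Type*} [Fintype ι] [DecidableEq ι]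
    (ρ : (Fin m → ℂ) →ₗ[ℝ] Matrix ι ι ℝ) (hρ : ∀ z, z ≠ 0 → (ρ z).det ≠ 0) :
    2 ^ (m - 1) ∣ Fintype.card ι := by
  let complexify : Matrix ι ι ℝ →ₗ[ℝ] EuclideanSpace ℂ ι →L[ℂ] EuclideanSpace ℂ ι :=
    (toEuclideanCLM (n := ι) (𝕜 := ℂ)).toAlgEquiv.toLinearMap.restrictScalars ℝ ∘ₗ
      Complex.ofRealAm.toLinearMap.mapMatrix
  have hdvd := two_pow_dvd_finrank_of_realLinear (complexify ∘ₗ ρ) fun z x hz hx h => hx <| by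
    have hdet : ((ρ z).map Complex.ofReal).det ≠ 0 := by
      have := Complex.ofRealHom.map_det (ρ z)
      rw [RingHom.mapMatrix_apply] at this
      exact this ▸ Complex.ofReal_ne_zero.2 (hρ z hz)
    apply WithLp.ofLp_injective
    exact eq_zero_of_mulVec_eq_zero hdet (congrArg WithLp.ofLp h)
  rwa [finrank_euclideanSpace] at hdvd

theorem finrank_le_one_of_det_ne_zero {W ι : Type*} [NormedAddCommGroup W] [NormedSpace ℝ W]
    [FiniteDimensional ℝ W] [Fintype ι] [DecidableEq ι] (hι : Odd (Fintype.card ι))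
    (ρ : W →ₗ[ℝ] Matrix ι ι ℝ) (hρ : ∀ z, z ≠ 0 → (ρ z).det ≠ 0) :
    Module.finrank ℝ W ≤ 1 := by
  by_contra! hW
  have hcont : Continuous fun z => (ρ z).det := ρ.continuous_of_finiteDimensional.matrix_det
  have hodd (z : W) : (ρ (-z)).det = -(ρ z).det := by
    rw [map_neg, Matrix.det_neg, hι.neg_one_pow, neg_one_mul]
  have hconn : IsPreconnected ({0}ᶜ : Set W) :=
    (isConnected_compl_singleton_of_one_lt_rank
      (by rwa [← Module.finrank_eq_rank, Nat.one_lt_cast]) 0).isPreconnected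
  have := Module.nontrivial_of_finrank_pos (R := ℝ) (zero_lt_one.trans hW)
  obtain ⟨z, hz⟩ := exists_ne (0 : W)
  obtain ⟨w, hw, hw0⟩ : (0 : ℝ) ∈ (fun z => (ρ z).det) '' {0}ᶜ := by
    rcases le_total 0 (ρ z).det with hpos | hneg
    · exact hconn.intermediate_value (neg_ne_zero.2 hz) hz hcont.continuousOn
        ⟨(hodd z).trans_le (neg_nonpos.2 hpos), hpos⟩
    · exact hconn.intermediate_value hz (neg_ne_zero.2 hz) hcont.continuousOn
        ⟨hneg, (neg_nonneg.2 hneg).trans_eq (hodd z).symm⟩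
  exact hρ w hw hw0

theorem eq_one_or_two_or_four_of_two_pow_dvd {m : ℕ} (hm : m ≠ 0) (h : 2 ^ (m - 1) ∣ 2 * m) :
    m = 1 ∨ m = 2 ∨ m = 4 := by
  have hpow (k : ℕ) : 2 * (k + 5) < 2 ^ (k + 4) := by
    induction k with
    | zero => norm_num
    | succ k ih => rw [Nat.succ_add, pow_succ]; lia
  have hlt : m < 5 := by
    by_contra! h5
    obtain ⟨k, rfl⟩ := Nat.exists_eq_add_of_le' h5
    exact (hpow k).not_ge (Nat.le_of_dvd (by lia) h)
  interval_cases m <;> simp_all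

theorem finrank_eq_of_no_zero_divisors {E : Type*} [AddCommGroup E] [Module ℝ E]
    [FiniteDimensional ℝ E] [Nontrivial E] (L : E →ₗ[ℝ] E →ₗ[ℝ] E)
    (hL : ∀ x y, L x y = 0 → x = 0 ∨ y = 0) :
    Module.finrank ℝ E ∈ ({1, 2, 4, 8} : Set ℕ) := by
  classical
  let b := Module.finBasis ℝ E
  let leftMulMatrix : E →ₗ[ℝ] Matrix _ _ ℝ := (LinearMap.toMatrix b b).toLinearMap ∘ₗ L
  have hdet (x : E) (hx : x ≠ 0) : (leftMulMatrix x).det ≠ 0 := by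
    change (LinearMap.toMatrix b b (L x)).det ≠ 0
    rw [LinearMap.det_toMatrix, ← isUnit_iff_ne_zero, ← LinearMap.isUnit_iff_isUnit_det,
      LinearMap.isUnit_iff_ker_eq_bot, LinearMap.ker_eq_bot']
    exact fun y hy => (hL x y hy).resolve_left hx
  have hpos : 0 < Module.finrank ℝ E := Module.finrank_pos
  rcases Nat.even_or_odd' (Module.finrank ℝ E) with ⟨m, hm | hm⟩
  · have : NeZero m := ⟨by lia⟩
    let e : (Fin m → ℂ) ≃ₗ[ℝ] E := LinearEquiv.ofFinrankEq _ _ (by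
      simp [Module.finrank_pi_fintype, hm, mul_comm])
    have hdvd := two_pow_dvd_card_of_det_ne_zero (leftMulMatrix ∘ₗ e.toLinearMap)
      fun z hz => hdet _ (e.map_ne_zero_iff.2 hz)
    rw [Fintype.card_fin, hm] at hdvd
    rcases eq_one_or_two_or_four_of_two_pow_dvd (NeZero.ne m) hdvd with rfl | rfl | rfl <;>
      simp [hm]
  · let e : EuclideanSpace ℝ (Fin (2 * m + 1)) ≃ₗ[ℝ] E := LinearEquiv.ofFinrankEq _ _ (by simp [hm])
    have hle := finrank_le_one_of_det_ne_zero (by rw [Fintype.card_fin, hm]; exact ⟨m, rfl⟩)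
      (leftMulMatrix ∘ₗ e.toLinearMap) fun z hz => hdet _ (e.map_ne_zero_iff.2 hz)
    rw [e.finrank_eq] at hle
    left
    lia

end DivisionAlgebras

section CrossProduct

variable {W : Type*} [NormedAddCommGroup W] [InnerProductSpace ℝ W] [FiniteDimensional ℝ W]
  (T : AlternatingMap ℝ W ℝ (Fin 3))

/-- The cross product on a Euclidean space attached to an alternating trilinear form `T`, given by
`⟪cross T x y, z⟫ = T ![x, y, z]`. -/
noncomputable def cross : W →ₗ[ℝ] W →ₗ[ℝ] W :=
  LinearMap.mk₂ ℝ
    (fun x y => ∑ i, T ![x, y, stdOrthonormalBasis ℝ W i] • stdOrthonormalBasis ℝ W i)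
    (fun x x' y => by simp [T.map_vecCons_add, add_smul, Finset.sum_add_distrib])
    (fun c x y => by simp [T.map_vecCons_smul, mul_smul, Finset.smul_sum])
    (fun x y y' => by
      have h z : T ![x, y + y', z] = T ![x, y, z] + T ![x, y', z] :=
        (T.curryLeft x).map_vecCons_add ![z] y y'
      simp [h, add_smul, Finset.sum_add_distrib])
    (fun c x y => by
      have h z : T ![x, c • y, z] = c • T ![x, y, z] := (T.curryLeft x).map_vecCons_smul ![z] c y
      simp [h, mul_smul, Finset.smul_sum])

theorem inner_cross (x y z : W) : ⟪cross T x y, z⟫_ℝ = T ![x, y, z] := by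
  let φ : W →ₗ[ℝ] ℝ := (AlternatingMap.ofSubsingleton ℝ W ℝ 0).symm ((T.curryLeft x).curryLeft y)
  have hφ (w : W) : φ w = T ![x, y, w] :=
    congrArg T (by ext i; fin_cases i <;> rfl)
  have hcross : cross T x y =
      ∑ i, T ![x, y, stdOrthonormalBasis ℝ W i] • stdOrthonormalBasis ℝ W i := rfl
  simp_rw [hcross, ← hφ, sum_inner, real_inner_smul_left]
  conv_rhs => rw [← (stdOrthonormalBasis ℝ W).sum_repr' z, map_sum]
  simp [mul_comm]

/-- The product `(α, x) (β, y) = (α β - ⟪x, y⟫, α y + β x + x × y)` on `ℝ ⊕ W`, where `×` is the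
cross product attached to `T`. For `W = ℝ³` and the volume form it is quaternion multiplication. -/
noncomputable def quaternionicMul : ℝ × W →ₗ[ℝ] ℝ × W →ₗ[ℝ] ℝ × W :=
  LinearMap.mk₂ ℝ
    (fun p q => (p.1 * q.1 - ⟪p.2, q.2⟫_ℝ, p.1 • q.2 + q.1 • p.2 + cross T p.2 q.2))
    (fun p p' q => by ext <;> simp [inner_add_left] <;> [ring; module])
    (fun c p q => by ext <;> simp [inner_smul_left] <;> [ring; module])
    (fun p q q' => by ext <;> simp [inner_add_right] <;> [ring; module])
    (fun c p q => by ext <;> simp [inner_smul_right] <;> [ring; module])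

variable {T}

lemma cross_eq_zero_of_quaternionicMul_eq_zero {p q : ℝ × W} (h : quaternionicMul T p q = 0) :
    cross T p.2 q.2 = 0 := by
  have hleft : ⟪cross T p.2 q.2, p.2⟫_ℝ = 0 := by
    rw [inner_cross]
    exact T.map_eq_zero_of_eq _ (i := 0) (j := 2) rfl (by decide)
  have hright : ⟪cross T p.2 q.2, q.2⟫_ℝ = 0 := by
    rw [inner_cross]
    exact T.map_eq_zero_of_eq _ (i := 1) (j := 2) rfl (by decide)
  have hvector : p.1 • q.2 + q.1 • p.2 + cross T p.2 q.2 = 0 := congrArg Prod.snd h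
  rw [← inner_self_eq_zero (𝕜 := ℝ)]
  simpa [inner_add_right, inner_smul_right, hleft, hright] using
    congrArg (⟪cross T p.2 q.2, ·⟫_ℝ) hvector

theorem eq_zero_or_eq_zero_of_quaternionicMul_eq_zero
    (hT : ∀ a b : W, LinearIndependent ℝ ![a, b] → ∃ x, T ![a, b, x] ≠ 0) {p q : ℝ × W}
    (h : quaternionicMul T p q = 0) : p = 0 ∨ q = 0 := by
  obtain ⟨α, x⟩ := p
  obtain ⟨β, y⟩ := q
  obtain ⟨hscalar, hvector⟩ : α * β - ⟪x, y⟫_ℝ = 0 ∧ α • y + β • x + cross T x y = 0 :=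
    Prod.mk_eq_zero.1 h
  have hcross : cross T x y = 0 := cross_eq_zero_of_quaternionicMul_eq_zero h
  rw [hcross, add_zero] at hvector
  have hdep : ¬ LinearIndependent ℝ ![x, y] := fun hxy => by
    obtain ⟨z, hz⟩ := hT x y hxy
    exact hz (by rw [← inner_cross, hcross, inner_zero_left])
  rcases eq_or_ne x 0 with rfl | hx
  · rw [inner_zero_left, sub_zero] at hscalar
    rw [smul_zero, add_zero] at hvector
    rcases eq_or_ne α 0 with rfl | hα
    · exact Or.inl rfl
    · exact Or.inr (Prod.ext ((mul_eq_zero.1 hscalar).resolve_left hα)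
        ((smul_eq_zero.1 hvector).resolve_left hα))
  · obtain ⟨t, rfl⟩ : ∃ t : ℝ, t • x = y := by
      simpa [LinearIndependent.pair_iff' hx] using hdep
    have hβ : α * t + β = 0 := by
      rw [smul_smul, ← add_smul] at hvector
      exact (smul_eq_zero.1 hvector).resolve_right hx
    have ht : t * (α ^ 2 + ⟪x, x⟫_ℝ) = 0 := by
      rw [inner_smul_right] at hscalar
      linear_combination -hscalar + α * hβ
    have hpos : 0 < α ^ 2 + ⟪x, x⟫_ℝ :=
      add_pos_of_nonneg_of_pos (sq_nonneg α) (real_inner_self_pos.2 hx)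
    obtain rfl := (mul_eq_zero.1 ht).resolve_right hpos.ne'
    right
    simpa using hβ

end CrossProduct

end SingularLine

/-- Except when `n ∈ {3,7}`, every alternating trilinear form on a real vector
space of dimension `n > 2` possesses a singular line. -/
theorem stmt_3 (V : Type*) [AddCommGroup V] [Module ℝ V] [FiniteDimensional ℝ V]
    (n : ℕ) (hdim : Module.finrank ℝ V = n) (hn : 2 < n) (h3 : n ≠ 3) (h7 : n ≠ 7)
    (T : AlternatingMap ℝ V ℝ (Fin 3)) :
    ∃ a b : V, LinearIndependent ℝ ![a, b] ∧ ∀ x : V, T ![a, b, x] = 0 := by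
  by_contra! hT
  let e : EuclideanSpace ℝ (Fin n) ≃ₗ[ℝ] V := LinearEquiv.ofFinrankEq _ _ (by simp [hdim])
  let S := T.compLinearMap e.toLinearMap
  have hS (a b : EuclideanSpace ℝ (Fin n)) (hab : LinearIndependent ℝ ![a, b]) :
      ∃ x, S ![a, b, x] ≠ 0 := by
    obtain ⟨x, hx⟩ := hT (e a) (e b)
      (by simpa [LinearIndependent.pair_iff, ← map_smul, ← map_add] using hab)
    refine ⟨e.symm x, ?_⟩
    have hcomp : (fun i => e (![a, b, e.symm x] i)) = ![e a, e b, x] := by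
      ext i; fin_cases i <;> simp
    rwa [AlternatingMap.compLinearMap_apply, LinearEquiv.coe_coe, hcomp]
  have hfinrank := SingularLine.finrank_eq_of_no_zero_divisors (SingularLine.quaternionicMul S)
    fun p q => SingularLine.eq_zero_or_eq_zero_of_quaternionicMul_eq_zero hS
  simp only [Module.finrank_prod, Module.finrank_self, finrank_euclideanSpace, Fintype.card_fin,
    Set.mem_insert_iff, Set.mem_singleton_iff] at hfinrank
  lia
end

section
/- Let q = 2^h with h even, and let μ ∈ GF(q) satisfy tr(μ) = 1 where tr : GF(q) → GF(2) is the absolute trace. Let T be the alternating trilinear form on V = GF(q)^6 with trivector t = f_{234} + f_{135} + f_{126} + f_{156} + f_{246} + f_{345} + μ f_{456}. Then the set of T-singular lines is a line-spread of PG(5,q). -/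
/-!
Let `θ` be a root of `X² + X + (μ + 1)`, which is irreducible because `μ + 1` has trace
`1 + h = 1`, and let `L = F(θ)`. Writing the elements of `L` as `re + im θ`, identify `F⁶` with `L³`
by pairing the coordinates `i` and `i + 3`. Since `im 1 = 0`, `im θ = im θ² = 1` and `im θ³ = μ`,
the given form is `T(x, y, z) = im (det_L (x, y, z))`.

As `im` is a nonzero functional, `T(v, w, ·)` vanishes exactly when `det_L (v, w, ·)` does, that is,
when `v` and `w` are linearly dependent over `L`. The singular lines are therefore the
one-dimensional `L`-subspaces of `L³`, and these partition the nonzero vectors.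
-/

open Module

section Trace

theorem sum_range_pow_sub_self_pow {R : Type*} [CommRing R] (p : ℕ) [ExpChar R p] (y : R) (n : ℕ) :
    ∑ i ∈ Finset.range n, (y ^ p - y) ^ p ^ i = y ^ p ^ n - y := by
  simp only [sub_pow_expChar_pow, ← pow_mul, ← pow_succ', Finset.sum_range_sub (y ^ p ^ ·),
    pow_zero, pow_one]

theorem pow_sub_self_ne_of_sum_pow_ne_zero {F : Type*} [Field F] [Fintype F] {p h : ℕ} [ExpChar F p]
    (hcard : Fintype.card F = p ^ h) {c : F} (hc : ∑ i ∈ Finset.range h, c ^ p ^ i ≠ 0) (y : F) :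
    y ^ p - y ≠ c := by
  rintro rfl
  rw [sum_range_pow_sub_self_pow, ← hcard, FiniteField.pow_card, sub_self] at hc
  exact hc rfl

theorem sum_range_add_one_pow_two_pow {R : Type*} [CommRing R] [CharP R 2] {h : ℕ} (hh : Even h)
    (c : R) :
    ∑ i ∈ Finset.range h, (c + 1) ^ 2 ^ i = ∑ i ∈ Finset.range h, c ^ 2 ^ i := by
  have natCast_h : (h : R) = 0 := (CharP.cast_eq_zero_iff R 2 h).2 hh.two_dvd
  simp [add_pow_char_pow, Finset.sum_add_distrib, natCast_h]

theorem sq_add_self_ne_add_one {F : Type*} [Field F] [Fintype F] [CharP F 2] {h : ℕ}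
    (hh : Even h) (hcard : Fintype.card F = 2 ^ h) {μ : F}
    (hμ : ∑ i ∈ Finset.range h, μ ^ 2 ^ i = 1) (y : F) : y ^ 2 + y ≠ μ + 1 := by
  rw [← CharTwo.sub_eq_add]
  refine pow_sub_self_ne_of_sum_pow_ne_zero hcard ?_ y
  rw [sum_range_add_one_pow_two_pow hh, hμ]
  exact one_ne_zero

end Trace

section AlternatingMap

theorem alternatingMap_ext_of_strictMono {R M N ι : Type*} [CommSemiring R] [AddCommMonoid M]
    [Module R M] [AddCommGroup N] [Module R N] [LinearOrder ι] {n : ℕ} (b : Basis ι R M)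
    {f g : M [⋀^Fin n]→ₗ[R] N} (h : ∀ v : Fin n → ι, StrictMono v → f (b ∘ v) = g (b ∘ v)) :
    f = g := by
  refine b.ext_alternating fun v hv => ?_
  have strictMono_sort : StrictMono (v ∘ Tuple.sort v) :=
    (Tuple.monotone_sort v).strictMono_of_injective (hv.comp (Tuple.sort v).injective)
  have map_sort := h _ strictMono_sort
  rw [← Function.comp_assoc, f.map_perm, g.map_perm] at map_sort
  exact smul_left_cancel _ map_sort

/-- `W` is singular for the alternating trilinear form `T` if `T(a, b, ·)` vanishes identically for
all `a, b ∈ W`. The `T`-singular lines are the singular `W` of dimension two. -/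
def IsSingular {R V : Type*} [CommSemiring R] [AddCommMonoid V] [Module R V]
    (T : V [⋀^Fin 3]→ₗ[R] R) (W : Submodule R V) : Prop :=
  ∀ a ∈ W, ∀ b ∈ W, ∀ x, T ![a, b, x] = 0

section Transport

variable {R V M : Type*} [CommSemiring R] [AddCommMonoid V] [Module R V] [AddCommMonoid M]
  [Module R M] (e : V ≃ₗ[R] M) (T : M [⋀^Fin 3]→ₗ[R] R)

theorem isSingular_map_iff (W : Submodule R V) :
    IsSingular T (W.map (e : V →ₗ[R] M)) ↔ IsSingular (T.compLinearMap (e : V →ₗ[R] M)) W := by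
  have comp_vec (a b x : V) : (e ∘ ![a, b, x] : Fin 3 → M) = ![e a, e b, e x] := by
    ext i; fin_cases i <;> rfl
  simp only [IsSingular, Submodule.mem_map, forall_exists_index, and_imp,
    forall_apply_eq_imp_iff₂, e.surjective.forall, LinearEquiv.coe_coe,
    AlternatingMap.compLinearMap_apply, ← comp_vec, Function.comp_def]

theorem existsUnique_isSingular_compLinearMap_iff (d : ℕ) (v : V) :
    (∃! W : Submodule R V,
      (finrank R W = d ∧ IsSingular (T.compLinearMap (e : V →ₗ[R] M)) W) ∧ v ∈ W) ↔
    ∃! W : Submodule R M, (finrank R W = d ∧ IsSingular T W) ∧ e v ∈ W := by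
  refine (Submodule.orderIsoMapComap e).toEquiv.existsUnique_congr fun W => ?_
  have map_eq : (Submodule.orderIsoMapComap e).toEquiv W = W.map (e : V →ₗ[R] M) := rfl
  rw [map_eq, isSingular_map_iff, e.finrank_map_eq, Submodule.mem_map_equiv, e.symm_apply_apply]

end Transport

end AlternatingMap

section DetForm

section Ring

variable {K L M ι : Type*} [CommRing K] [CommRing L] [Algebra K L] [AddCommGroup M] [Module K M]
  [Module L M] [IsScalarTower K L M] [Fintype ι] [DecidableEq ι]

/-- The alternating `K`-form `v ↦ φ (det v)` on an `L`-module with basis `b`, where `φ` is a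
`K`-linear functional on `L`. -/
noncomputable def detForm (φ : L →ₗ[K] K) (b : Basis ι L M) : M [⋀^ι]→ₗ[K] K :=
  { φ.compMultilinearMap (b.det.toMultilinearMap.restrictScalars K) with
    map_eq_zero_of_eq' v i j hv hij := by simp [b.det.map_eq_zero_of_eq v hv hij] }

theorem detForm_apply (φ : L →ₗ[K] K) (b : Basis ι L M) (v : ι → M) :
    detForm φ b v = φ (b.det v) := rfl

theorem isSingular_restrictScalars_span_singleton (φ : L →ₗ[K] K) (b : Basis (Fin 3) L M) (v : M) :
    IsSingular (detForm φ b) ((L ∙ v).restrictScalars K) := by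
  intro _ hc _ hd x
  obtain ⟨c, rfl⟩ := Submodule.mem_span_singleton.1 hc
  obtain ⟨d, rfl⟩ := Submodule.mem_span_singleton.1 hd
  have smul_vec : ![c • v, d • v, x] = fun i => ![c, d, 1] i • ![v, v, x] i := by
    ext i; fin_cases i <;> simp
  have det_eq_zero : b.det ![v, v, x] = 0 :=
    b.det.map_eq_zero_of_eq _ (i := 0) (j := 1) rfl (by decide)
  rw [detForm_apply, smul_vec, ← AlternatingMap.coe_multilinearMap, MultilinearMap.map_smul_univ,
    AlternatingMap.coe_multilinearMap, det_eq_zero, smul_zero, map_zero]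

end Ring

variable {K L M : Type*} [Field K] [Field L] [Algebra K L] [AddCommGroup M] [Module K M]
  [Module L M] [IsScalarTower K L M] {φ : L →ₗ[K] K}

theorem forall_detForm_snoc_eq_zero_iff (hφ : φ ≠ 0) {n : ℕ} (b : Basis (Fin (n + 1)) L M)
    (a : Fin n → M) :
    (∀ x, detForm φ b (Fin.snoc a x : Fin (n + 1) → M) = 0) ↔ ¬ LinearIndependent L a := by
  simp only [detForm_apply]
  constructor
  · intro h ha
    obtain ⟨x, hx⟩ := exists_linearIndependent_snoc_of_lt_finrank ha
      (by simp [finrank_eq_card_basis b])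
    set d := b.det (Fin.snoc a x : Fin (n + 1) → M)
    have d_ne_zero : d ≠ 0 :=
      (b.is_basis_iff_det.1 ⟨hx, hx.span_eq_top_of_card_eq_finrank
        (finrank_eq_card_basis b).symm⟩).ne_zero
    obtain ⟨l, hl⟩ : ∃ l, φ l ≠ 0 := by simpa [LinearMap.ext_iff] using hφ
    have det_snoc_smul : b.det (Fin.snoc a ((l / d) • x) : Fin (n + 1) → M) = l :=
      (b.det.toMultilinearMap.snoc_smul a (l / d) x).trans (div_mul_cancel₀ l d_ne_zero)
    exact hl (det_snoc_smul ▸ h ((l / d) • x))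
  · intro ha x
    rw [b.det.map_linearDependent _ fun hx => ha (linearIndependent_finSnoc.1 hx).1, map_zero]

theorem forall_detForm_eq_zero_iff_mem_span (hφ : φ ≠ 0) (b : Basis (Fin 3) L M) {v : M}
    (hv : v ≠ 0) (w : M) : (∀ x, detForm φ b ![v, w, x] = 0) ↔ w ∈ L ∙ v := by
  have snoc_vec (x : M) : (Fin.snoc ![v, w] x : Fin 3 → M) = ![v, w, x] := by simp
  simp only [← snoc_vec, forall_detForm_snoc_eq_zero_iff hφ b, LinearIndependent.pair_iff' hv,
    Submodule.mem_span_singleton, not_forall, not_not]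

theorem existsUnique_isSingular_detForm [FiniteDimensional K L] (hφ : φ ≠ 0)
    (b : Basis (Fin 3) L M) {v : M} (hv : v ≠ 0) :
    ∃! W : Submodule K M,
      (finrank K W = finrank K L ∧ IsSingular (detForm φ b) W) ∧ v ∈ W := by
  let spanEquiv : L ≃ₗ[K] (L ∙ v).restrictScalars K :=
    (LinearEquiv.toSpanNonzeroSingleton L M v hv).restrictScalars K
  refine ⟨(L ∙ v).restrictScalars K,
    ⟨⟨spanEquiv.finrank_eq.symm, isSingular_restrictScalars_span_singleton φ b v⟩,
      Submodule.mem_span_singleton_self v⟩, ?_⟩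
  rintro W ⟨⟨finrank_W, singular_W⟩, hvW⟩
  have : FiniteDimensional K ((L ∙ v).restrictScalars K) := Module.Finite.equiv spanEquiv
  have W_le_span : W ≤ (L ∙ v).restrictScalars K := fun w hw =>
    (forall_detForm_eq_zero_iff_mem_span hφ b hv w).1 (singular_W v hvW w hw)
  exact Submodule.eq_of_le_of_finrank_eq W_le_span (finrank_W.trans spanEquiv.finrank_eq)

end DetForm

section Coordinates

/-- The identification of `R²ⁿ` with `(R[θ])ⁿ` for a quadratic algebra `R[θ]`: the coordinates `i`
and `i + n` of a vector are the components of `1` and `θ` in the `i`-th entry of its image. -/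
def reImEquiv {R : Type*} [Semiring R] (n : ℕ) (a b : R) :
    (Fin (n + n) → R) ≃ₗ[R] (Fin n → QuadraticAlgebra R a b) where
  toFun v i := ⟨v (Fin.castAdd n i), v (Fin.natAdd n i)⟩
  invFun z := Fin.append (fun i => (z i).re) fun i => (z i).im
  map_add' _ _ := rfl
  map_smul' _ _ := rfl
  left_inv _ := Fin.append_castAdd_natAdd
  right_inv z := by ext i <;> simp only [Fin.append_left, Fin.append_right]

/-- The form `im (det (x, y, z))` on `(F[θ])³ ≃ F⁶`, where `θ² = (μ + 1) + θ`. -/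
noncomputable def imDetForm {F : Type*} [CommRing F] (μ : F) : (Fin 6 → F) [⋀^Fin 3]→ₗ[F] F :=
  (detForm (QuadraticAlgebra.imₗ (μ + 1) 1) (Pi.basisFun _ (Fin 3))).compLinearMap
    (reImEquiv 3 (μ + 1) 1 : (Fin 6 → F) →ₗ[F] _)

theorem imDetForm_single {F : Type*} [CommRing F] [CharP F 2] (μ : F) {i j k : Fin 6}
    (hij : i < j) (hjk : j < k) :
    imDetForm μ ![Pi.single i 1, Pi.single j 1, Pi.single k 1] =
      if ((i : ℕ), (j : ℕ), (k : ℕ)) ∈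
          [((1 : ℕ), (2 : ℕ), (3 : ℕ)), (0, 2, 4), (0, 1, 5),
            (0, 4, 5), (1, 3, 5), (2, 3, 4)] then 1
      else if ((i : ℕ), (j : ℕ), (k : ℕ)) = (3, 4, 5) then μ
      else 0 := by
  simp only [imDetForm, AlternatingMap.compLinearMap_apply, detForm_apply, Pi.basisFun_det_apply,
    Matrix.det_fin_three]
  fin_cases i <;> fin_cases j <;> try exact absurd hij (by decide)
  all_goals fin_cases k <;> try exact absurd hjk (by decide)
  all_goals simp [reImEquiv, Pi.single_apply, CharTwo.neg_eq, add_assoc, CharTwo.add_self_eq_zero]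

theorem existsUnique_isSingular_imDetForm {F : Type*} [Field F] {μ : F}
    (hμ : ∀ r : F, r ^ 2 ≠ μ + 1 + 1 * r) {v : Fin 6 → F} (hv : v ≠ 0) :
    ∃! W : Submodule F (Fin 6 → F), (finrank F W = 2 ∧ IsSingular (imDetForm μ) W) ∧ v ∈ W := by
  have : Fact (∀ r : F, r ^ 2 ≠ μ + 1 + 1 * r) := ⟨hμ⟩
  have im_ne_zero : QuadraticAlgebra.imₗ (μ + 1) 1 ≠ 0 := fun h => by
    simpa using LinearMap.congr_fun h ⟨0, 1⟩
  rw [imDetForm, existsUnique_isSingular_compLinearMap_iff,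
    ← QuadraticAlgebra.finrank_eq_two (μ + 1) (1 : F)]
  exact existsUnique_isSingular_detForm im_ne_zero (Pi.basisFun _ (Fin 3))
    ((LinearEquiv.map_ne_zero_iff _).2 hv)

end Coordinates

theorem stmt_8_general {F : Type*} [Field F] [CharP F 2] (μ : F) (hμ : ∀ y : F, y ^ 2 + y ≠ μ + 1)
    (T : (Fin 6 → F) [⋀^Fin 3]→ₗ[F] F)
    (hT : ∀ i j k : Fin 6, i < j → j < k →
      T ![Pi.single i 1, Pi.single j 1, Pi.single k 1] =
        if ((i : ℕ), (j : ℕ), (k : ℕ)) ∈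
            [((1 : ℕ), (2 : ℕ), (3 : ℕ)), (0, 2, 4), (0, 1, 5),
              (0, 4, 5), (1, 3, 5), (2, 3, 4)] then 1
        else if ((i : ℕ), (j : ℕ), (k : ℕ)) = (3, 4, 5) then μ
        else 0)
    (v : Fin 6 → F) (hv : v ≠ 0) :
    ∃! W : Submodule F (Fin 6 → F), (finrank F W = 2 ∧ IsSingular T W) ∧ v ∈ W := by
  obtain rfl : T = imDetForm μ := by
    refine alternatingMap_ext_of_strictMono (Pi.basisFun F (Fin 6)) fun s hs => ?_
    have basisFun_comp : Pi.basisFun F (Fin 6) ∘ s =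
        ![Pi.single (s 0) 1, Pi.single (s 1) 1, Pi.single (s 2) 1] := by
      ext l : 1; fin_cases l <;> simp
    have h01 : s 0 < s 1 := hs (by decide)
    have h12 : s 1 < s 2 := hs (by decide)
    rw [basisFun_comp, hT _ _ _ h01 h12, imDetForm_single μ h01 h12]
  refine existsUnique_isSingular_imDetForm (fun r hr => hμ r ?_) hv
  rw [hr, one_mul, add_assoc, CharTwo.add_self_eq_zero, add_zero]

/-- For `q = 2^h` with `h` even and `μ ∈ GF(q)` of absolute trace `1`, the
alternating trilinear form on `GF(q)⁶` with trivector
`t = f₂₃₄ + f₁₃₅ + f₁₂₆ + f₁₅₆ + f₂₄₆ + f₃₄₅ + μ f₄₅₆` has as its singular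
lines a line-spread of `PG(5,q)`. (0-based indices.) -/
theorem stmt_8 (h : ℕ) (hh : Even h) (hpos : 0 < h) (F : Type*) [Field F] [Fintype F]
    (hcard : Fintype.card F = 2 ^ h)
    (μ : F) (hμ : ∑ i ∈ Finset.range h, μ ^ 2 ^ i = 1)
    (T : AlternatingMap F (Fin 6 → F) F (Fin 3))
    (hT : ∀ i j k : Fin 6, i < j → j < k →
      T ![Pi.single i 1, Pi.single j 1, Pi.single k 1] =
        if ((i : ℕ), (j : ℕ), (k : ℕ)) ∈
            [((1:ℕ), (2:ℕ), (3:ℕ)), (0, 2, 4), (0, 1, 5),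
              (0, 4, 5), (1, 3, 5), (2, 3, 4)] then 1
        else if ((i : ℕ), (j : ℕ), (k : ℕ)) = (3, 4, 5) then μ
        else 0) :
    ∀ v : Fin 6 → F, v ≠ 0 → ∃! W : Submodule F (Fin 6 → F),
      (Module.finrank F W = 2 ∧ ∀ a ∈ W, ∀ b ∈ W, ∀ x, T ![a, b, x] = 0) ∧
        v ∈ W := by
  have : CharP F 2 := charP_of_card_eq_prime_pow hcard
  exact stmt_8_general μ (sq_add_self_ne_add_one hh hcard hμ) T hT
end
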